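/- arXiv:2511.10414 — 14 statements merged into one kernel-verified Lean document; each statement's English description precedes it below -/
import Mathlib

section
/- Let (x^k) satisfy the generalized descent condition, let x̄ be a cluster point of (x^k), suppose there exist c > 0 and K ∈ ℕ such that ‖x^{k+1} − x^k‖ ≤ c‖∇f(x^k)‖^{θ−1} for all k ≥ K, and suppose f satisfies the KL inequality at x̄ with exponent ϑ ∈ (0,1) and constant τ > 0. Then the sequence (x^k) has finite length, i.e., ∑_{k=0}^∞ ‖x^{k+1} − x^k‖ < ∞, and consequently x^k → x̄ as k → ∞. -/
/-!
Write `Δ k = f (x k) - f x̄ ≥ 0`; descent and the cluster point give `Δ k → 0` monotonically.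
Concavity of `t ↦ t ^ (1 - ϑ)`, together with descent, the KL inequality and the step bound, gives
`‖x (k + 1) - x k‖ ≤ M * (Δ k ^ (1 - ϑ) - Δ (k + 1) ^ (1 - ϑ))` with `M = c τ / ((1 - ϑ) ρ)` as long
as `x k` is in the KL neighbourhood (`kl_step_bound`). Hence the Lyapunov quantity
`V k = ‖x k - x̄‖ + M * Δ k ^ (1 - ϑ)` does not increase there. Since `V k` is arbitrarily small for
some late `k`, the iterates never leave the neighbourhood again. The step bound then telescopes,
which yields finite length, and `V` is eventually nonincreasing with a subsequence tending to `0`,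
so `V k → 0` and `x k → x̄`.
-/

open Filter Topology

/-- The tangent-line inequality for the concave function `t ↦ t ^ s`, based at `a`. -/
lemma rpow_tangent {a b s : ℝ} (ha : 0 < a) (hb : 0 ≤ b) (hs : 0 ≤ s) (hs1 : s ≤ 1) :
    s * a ^ (s - 1) * (a - b) ≤ a ^ s - b ^ s := by
  have hq : -1 ≤ b / a - 1 := by
    have : 0 ≤ b / a := by positivity
    linarith
  have h := rpow_one_add_le_one_add_mul_self hq hs hs1
  rw [add_sub_cancel, Real.div_rpow hb ha.le] at h
  have hp : 0 < a ^ s := Real.rpow_pos_of_pos ha s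
  rw [div_le_iff₀ hp] at h
  rw [Real.rpow_sub_one ha.ne']
  have : s * (a ^ s / a) * (a - b) = a ^ s - (1 + s * (b / a - 1)) * a ^ s := by
    field_simp
    ring
  linarith

/-- One step of the Kurdyka–Łojasiewicz argument: `a` and `b` are consecutive function-value gaps
and `g` is the gradient norm at the first of the two iterates. For `a = 0` both sides vanish, so
the KL inequality is only required for `0 < a`. -/
lemma kl_step_bound {a b g ρ θ c ϑ τ : ℝ} (hb : 0 ≤ b) (hg : 0 ≤ g) (hρ : 0 < ρ) (hθ : 1 < θ)
    (hc : 0 < c) (hϑ : ϑ ∈ Set.Ioo (0 : ℝ) 1) (hτ : 0 < τ) (hab : b ≤ a - ρ * g ^ θ)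
    (hkl : 0 < a → a ^ ϑ ≤ τ * g) :
    c * g ^ (θ - 1) ≤ c * τ / ((1 - ϑ) * ρ) * (a ^ (1 - ϑ) - b ^ (1 - ϑ)) := by
  obtain ⟨h0, h1⟩ := hϑ
  have hs : 0 < 1 - ϑ := by linarith
  have hgθ : 0 ≤ ρ * g ^ θ := by positivity
  rcases (show 0 ≤ a by linarith).eq_or_lt with ha | ha
  · have hb0 : b = 0 := by linarith
    have hg0 : g = 0 := by
      have : g ^ θ = 0 := by nlinarith [Real.rpow_nonneg hg θ]
      exact ((Real.rpow_eq_zero_iff_of_nonneg hg).1 this).1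
    subst ha hb0 hg0
    simp [Real.zero_rpow (show θ - 1 ≠ 0 by linarith)]
  · have hkl := hkl ha
    have hp : 0 < a ^ ϑ := Real.rpow_pos_of_pos ha ϑ
    have hgpos : 0 < g := pos_of_mul_pos_right (hp.trans_le hkl) hτ.le
    have ht := rpow_tangent ha hb hs.le (show 1 - ϑ ≤ 1 by linarith)
    have he : (1 - ϑ - 1 : ℝ) = -ϑ := by ring
    rw [he, Real.rpow_neg ha.le] at ht
    have hinv : (τ * g)⁻¹ ≤ (a ^ ϑ)⁻¹ := inv_anti₀ hp hkl
    have hgg : g ^ θ = g ^ (θ - 1) * g := by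
      rw [Real.rpow_sub_one hgpos.ne']
      field_simp
    calc c * g ^ (θ - 1)
        = c * τ / ((1 - ϑ) * ρ) * ((1 - ϑ) * (τ * g)⁻¹ * (ρ * g ^ θ)) := by
          rw [hgg]
          field_simp
      _ ≤ c * τ / ((1 - ϑ) * ρ) * ((1 - ϑ) * (a ^ ϑ)⁻¹ * (a - b)) := by
          gcongr
          linarith
      _ ≤ _ := by gcongr

/-- Under the generalized descent condition, the relative-error-type
condition `‖x^{k+1} − x^k‖ ≤ c‖∇f(x^k)‖^{θ−1}` (for large `k`), and the KL inequality
at a cluster point `x̄`, the sequence has finite length and converges to `x̄`. -/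
theorem deal_finite_length_convergence {n : ℕ} (f : EuclideanSpace ℝ (Fin n) → ℝ)
    (hf : ContDiff ℝ 1 f) (hbdd : BddBelow (Set.range f))
    (fStar : ℝ) (hfStar : fStar = ⨅ y, f y)
    (ρ θ : ℝ) (hρ : 0 < ρ) (hθ : 1 < θ)
    (x : ℕ → EuclideanSpace ℝ (Fin n))
    (hdesc : ∀ k : ℕ, f (x (k + 1)) ≤ f (x k) - ρ * ‖gradient f (x k)‖ ^ θ)
    (xbar : EuclideanSpace ℝ (Fin n))
    (hcluster : ∃ φ : ℕ → ℕ, StrictMono φ ∧ Tendsto (fun j => x (φ j)) atTop (𝓝 xbar))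
    (c : ℝ) (hc : 0 < c) (K : ℕ)
    (hstep : ∀ k : ℕ, K ≤ k → ‖x (k + 1) - x k‖ ≤ c * ‖gradient f (x k)‖ ^ (θ - 1))
    (ϑ τ : ℝ) (hϑ : ϑ ∈ Set.Ioo (0 : ℝ) 1) (hτ : 0 < τ)
    (hKL : ∃ r ξ : ℝ, 0 < r ∧ 0 < ξ ∧ ∀ y : EuclideanSpace ℝ (Fin n),
      ‖y - xbar‖ < r → f xbar < f y → f y < f xbar + ξ →
        (f y - f xbar) ^ ϑ ≤ τ * ‖gradient f y‖) :
    (Summable fun k : ℕ => ‖x (k + 1) - x k‖) ∧ Tendsto x atTop (𝓝 xbar) := by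
  obtain ⟨φ, hφ, hlim⟩ := hcluster
  obtain ⟨r, ξ, hr, hξ, hKL⟩ := hKL
  have hs : 0 < 1 - ϑ := by linarith [hϑ.2]
  have hanti : Antitone fun k => f (x k) := antitone_nat_of_succ_le fun k => by
    have : 0 ≤ ρ * ‖gradient f (x k)‖ ^ θ := by positivity
    linarith [hdesc k]
  have hflim : Tendsto (fun j => f (x (φ j))) atTop (𝓝 (f xbar)) :=
    (hf.continuous.tendsto xbar).comp hlim
  have hnonneg : ∀ k, 0 ≤ f (x k) - f xbar := fun k => by
    have : f xbar ≤ f (x k) := le_of_tendsto hflim <| by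
      filter_upwards [eventually_ge_atTop k] with j hj
      exact hanti (hj.trans hφ.le_apply)
    linarith
  set M : ℝ := c * τ / ((1 - ϑ) * ρ) with hM
  have hM0 : 0 < M := by positivity
  set D : ℕ → ℝ := fun k => M * (f (x k) - f xbar) ^ (1 - ϑ) with hD
  have hD0 : ∀ k, 0 ≤ D k := fun k => mul_nonneg hM0.le (Real.rpow_nonneg (hnonneg k) _)
  set V : ℕ → ℝ := fun k => ‖x k - xbar‖ + D k with hV
  have hV0 : ∀ k, 0 ≤ V k := fun k => add_nonneg (norm_nonneg _) (hD0 k)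
  have hbound : ∀ k, K ≤ k → ‖x k - xbar‖ < r → f (x k) < f xbar + ξ →
      ‖x (k + 1) - x k‖ ≤ D k - D (k + 1) := by
    intro k hk hxr hfξ
    have h := kl_step_bound (a := f (x k) - f xbar) (hnonneg (k + 1))
      (norm_nonneg (gradient f (x k))) hρ hθ hc hϑ hτ
      (by linarith [hdesc k]) (fun ha => hKL _ hxr (by linarith) hfξ)
    rw [← hM, mul_sub] at h
    exact (hstep k hk).trans h
  have hVsub : Tendsto (fun j => V (φ j)) atTop (𝓝 0) := by
    have h1 : Tendsto (fun j => ‖x (φ j) - xbar‖) atTop (𝓝 0) :=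
      tendsto_iff_norm_sub_tendsto_zero.1 hlim
    have h2 : Tendsto (fun j => f (x (φ j)) - f xbar) atTop (𝓝 0) := by
      simpa using hflim.sub_const (f xbar)
    have h3 := (h2.rpow_const (p := 1 - ϑ) (Or.inr hs.le)).const_mul M
    rw [Real.zero_rpow hs.ne', mul_zero] at h3
    simpa using h1.add h3
  -- A late iterate from which the sequence is trapped in the KL neighbourhood.
  obtain ⟨m, hmK, hmV, hmξ⟩ : ∃ m, K ≤ m ∧ V m < r ∧ f (x m) < f xbar + ξ := by
    obtain ⟨j, hj1, hj2, hj3⟩ := ((eventually_ge_atTop K).and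
      ((hVsub.eventually_lt_const hr).and
        (hflim.eventually_lt_const (show f xbar < f xbar + ξ by linarith)))).exists
    exact ⟨φ j, hj1.trans hφ.le_apply, hj2, hj3⟩
  have hVstep : ∀ k, m ≤ k → V k < r →
      ‖x (k + 1) - x k‖ ≤ D k - D (k + 1) ∧ V (k + 1) ≤ V k := by
    intro k hk hVk
    have hxr : ‖x k - xbar‖ < r := by
      have := hD0 k
      simp only [hV] at hVk
      linarith
    have h := hbound k (hmK.trans hk) hxr ((hanti hk).trans_lt hmξ)
    refine ⟨h, ?_⟩
    have htri := norm_sub_le_norm_sub_add_norm_sub (x (k + 1)) (x k) xbar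
    simp only [hV]
    linarith
  have htrap : ∀ k, m ≤ k → V k < r := fun k hk => by
    induction k, hk using Nat.le_induction with
    | base => exact hmV
    | succ k hk ih => exact (hVstep k hk ih).2.trans_lt ih
  have hVanti : ∀ i j, m ≤ i → i ≤ j → V j ≤ V i := fun i j hi hij => by
    induction j, hij using Nat.le_induction with
    | base => exact le_rfl
    | succ j hj ih => exact (hVstep j (hi.trans hj) (htrap j (hi.trans hj))).2.trans ih
  constructor
  · rw [← summable_nat_add_iff m]
    refine summable_of_sum_range_le (c := D m) (fun _ => norm_nonneg _) fun N => ?_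
    have hN : ∑ i ∈ Finset.range N, ‖x (i + m + 1) - x (i + m)‖ ≤ D m - D (N + m) := by
      induction N with
      | zero => simp
      | succ N ih =>
        rw [Finset.sum_range_succ]
        have h := (hVstep (N + m) (by omega) (htrap _ (by omega))).1
        rw [show N + 1 + m = N + m + 1 by ring]
        linarith
    linarith [hD0 (N + m)]
  · rw [Metric.tendsto_atTop]
    intro ε hε
    obtain ⟨j, hj1, hj2⟩ := ((eventually_ge_atTop m).and
      (hVsub.eventually_lt_const hε)).exists
    refine ⟨φ j, fun k hk => ?_⟩
    have h := hVanti _ k (hj1.trans hφ.le_apply) hk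
    have := hD0 k
    rw [dist_eq_norm]
    simp only [hV] at h hj2
    linarith
end

section
/- Let (x^k) satisfy the generalized descent condition, let x̄ be a cluster point of (x^k), suppose there exist c > 0 and K ∈ ℕ such that ‖x^{k+1} − x^k‖ ≤ c‖∇f(x^k)‖^{θ−1} for all k ≥ K, and suppose f satisfies the KL inequality at x̄ with exponent ϑ ∈ (0,1) and constant τ > 0, where θ > 1/ϑ. Then there exist μ > 0 and k₀ ∈ ℕ such that for all k ≥ k₀: f(x^k) − f(x̄) ≤ μ k^{−1/(ϑθ−1)}, ‖∇f(x^k)‖ ≤ (μ/ρ)^{1/θ} k^{−1/(θ(ϑθ−1))}, and ‖x^k − x̄‖ ≤ c τ ρ^{−1} (1−ϑ)^{−1} μ^{1−ϑ} k^{−(1−ϑ)/(ϑθ−1)}. -/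
/-!
Put `d k = f (x k) - f xbar`, `g k = ‖∇f (x k)‖` and `s = ϑ * θ - 1 > 0`. The values `f (x k)` are
nonincreasing and have a subsequence tending to `f xbar`, so `d` decreases to `0`.

Wherever the KL inequality applies, concavity of `t ↦ t ^ (1 - ϑ)` turns the descent condition and
the step bound into `‖x (k+1) - x k‖ ≤ C * (d k ^ (1 - ϑ) - d (k+1) ^ (1 - ϑ))` with
`C = c * τ * ρ⁻¹ * (1 - ϑ)⁻¹` (`kl_step`). By telescoping, iterates that start close enough to
`xbar` stay in the KL ball (`kl_trapped`), and passing to the limit along the subsequence gives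
`‖x k - xbar‖ ≤ C * d k ^ (1 - ϑ)`. Similarly `ρ * g k ^ θ ≤ d k`, so the second and third rates
follow from the first one.

For the first rate, KL and descent give `d (k+1) ≤ d k - a * d k ^ (1 + s)` with `a = ρ / τ ^ θ`.
If `d` never vanishes, then `d k ^ (-s)` grows by at least `s * a` at each step (`rpow_neg_growth`),
hence at least linearly in `k`. If `d` vanishes once, it vanishes from then on.
-/

open Filter Topology

/-- Tangent-line inequality for the concave function `t ↦ t ^ (1 - ϑ)` at `a`. -/
lemma concave_step {a b ϑ : ℝ} (ha : 0 < a) (hb : 0 ≤ b) (h0 : 0 < ϑ) (h1 : ϑ < 1) :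
    (1 - ϑ) * (a - b) / a ^ ϑ ≤ a ^ (1 - ϑ) - b ^ (1 - ϑ) := by
  have h := Real.geom_mean_le_arith_mean2_weighted (w₁ := 1 - ϑ) (w₂ := ϑ)
    (by linarith) h0.le hb ha.le (by ring)
  have hp : 0 < a ^ ϑ := Real.rpow_pos_of_pos ha _
  rw [div_le_iff₀ hp, sub_mul (a ^ (1 - ϑ)), ← Real.rpow_add ha]
  have : (1 - ϑ + ϑ) = 1 := by ring
  rw [this, Real.rpow_one]
  linarith

/-- The step length is controlled by the decrease of `d ^ (1 - ϑ)`; here `a`, `b` are two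
consecutive gaps, `g` the gradient norm and `ℓ` the step length. For `a = 0` the descent condition
forces `g = 0`, hence `ℓ ≤ 0`. -/
lemma kl_step {a b g ℓ ρ θ c ϑ τ : ℝ} (ha : 0 ≤ a) (hb : 0 ≤ b) (hg : 0 ≤ g)
    (hρ : 0 < ρ) (hθ : 1 < θ) (hc : 0 < c) (h0 : 0 < ϑ) (h1 : ϑ < 1) (hτ : 0 < τ)
    (hd : b ≤ a - ρ * g ^ θ) (hℓ : ℓ ≤ c * g ^ (θ - 1)) (hKL : 0 < a → a ^ ϑ ≤ τ * g) :
    ℓ ≤ c * τ * ρ⁻¹ * (1 - ϑ)⁻¹ * (a ^ (1 - ϑ) - b ^ (1 - ϑ)) := by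
  have hgθ : 0 ≤ g ^ θ := Real.rpow_nonneg hg _
  rcases ha.eq_or_lt with rfl | ha
  · have hb0 : b = 0 := by nlinarith [mul_nonneg hρ.le hgθ]
    have hg0 : g = 0 := by
      by_contra hne
      have := Real.rpow_pos_of_pos (lt_of_le_of_ne hg (Ne.symm hne)) θ
      nlinarith [mul_pos hρ this]
    subst hb0 hg0
    rw [Real.zero_rpow (by linarith)] at hℓ
    simpa using hℓ
  · have hk := hKL ha
    have hp : 0 < a ^ ϑ := Real.rpow_pos_of_pos ha _
    have hg0 : 0 < g := by
      by_contra hne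
      nlinarith
    have hϑ : 0 < 1 - ϑ := by linarith
    have hcs := concave_step ha hb h0 h1
    calc ℓ ≤ c * g ^ (θ - 1) := hℓ
      _ = c * (g ^ θ / g) := by rw [Real.rpow_sub hg0, Real.rpow_one]
      _ ≤ c * (((a - b) / ρ) * (τ / a ^ ϑ)) := by
        have e1 : g ^ θ ≤ (a - b) / ρ := by
          rw [le_div_iff₀ hρ]; linarith
        have e2 : g⁻¹ ≤ τ / a ^ ϑ := by
          rw [le_div_iff₀ hp, inv_mul_le_iff₀ hg0]; linarith
        rw [div_eq_mul_inv (g ^ θ)]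
        have e3 : 0 ≤ (a - b) / ρ := hgθ.trans e1
        gcongr
      _ = c * τ * ρ⁻¹ * (1 - ϑ)⁻¹ * ((1 - ϑ) * (a - b) / a ^ ϑ) := by
        field_simp
      _ ≤ _ := by gcongr

/-- Iterates starting close enough to `xbar` stay in the ball of radius `r`, because the total
path length is bounded by the initial value of the potential `p`. -/
lemma kl_trapped {E : Type*} [NormedAddCommGroup E] (x : ℕ → E) (xbar : E) (p : ℕ → ℝ)
    (hp : ∀ k, 0 ≤ p k) (r : ℝ) (k₁ : ℕ) (hstart : ‖x k₁ - xbar‖ + p k₁ < r)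
    (hstep : ∀ k, k₁ ≤ k → ‖x k - xbar‖ < r → ‖x (k + 1) - x k‖ ≤ p k - p (k + 1)) :
    ∀ k, k₁ ≤ k → ‖x k - xbar‖ < r := by
  have key : ∀ k, k₁ ≤ k → ‖x k - xbar‖ ≤ ‖x k₁ - xbar‖ + p k₁ - p k := by
    intro k hk
    induction k, hk using Nat.le_induction with
    | base => simp
    | succ k hk ih =>
      have h1 := hstep k hk (by linarith [hp k])
      have h2 := norm_add_le (x (k + 1) - x k) (x k - xbar)
      rw [sub_add_sub_cancel] at h2
      linarith
  intro k hk
  linarith [key k hk, hp k]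

lemma path_length {E : Type*} [NormedAddCommGroup E] (x : ℕ → E) (p : ℕ → ℝ) (k₁ : ℕ)
    (hstep : ∀ k, k₁ ≤ k → ‖x (k + 1) - x k‖ ≤ p k - p (k + 1)) (k m : ℕ) (hk : k₁ ≤ k)
    (hm : k ≤ m) : ‖x m - x k‖ ≤ p k - p m := by
  induction m, hm using Nat.le_induction with
  | base => simp
  | succ m hm ih =>
    have h1 := hstep m (hk.trans hm)
    have h2 := norm_add_le (x (m + 1) - x m) (x m - x k)
    rw [sub_add_sub_cancel] at h2
    linarith

/-- One step of `d ↦ d - a * d ^ (1 + s)` increases `d ^ (-s)` by at least `s * a`. With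
`u = a * d ^ s` this is `(1 - u) ^ (-s) ≥ exp (s * u) ≥ 1 + s * u`. -/
lemma rpow_neg_growth {d e a s : ℝ} (hd : 0 < d) (he : 0 < e) (hs : 0 < s)
    (h : e ≤ d - a * d ^ (1 + s)) : d ^ (-s) + s * a ≤ e ^ (-s) := by
  have hds : 0 < d ^ s := Real.rpow_pos_of_pos hd _
  rw [Real.rpow_add hd, Real.rpow_one] at h
  set u := a * d ^ s with hu
  have h' : e ≤ d * (1 - u) := by rw [hu]; linarith
  have hexp : e ≤ d * Real.exp (-u) := h'.trans
    (mul_le_mul_of_nonneg_left (by linarith [Real.add_one_le_exp (-u)]) hd.le)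
  have h2 : (d * Real.exp (-u)) ^ (-s) ≤ e ^ (-s) :=
    Real.rpow_le_rpow_of_nonpos he hexp (by linarith)
  rw [Real.mul_rpow hd.le (Real.exp_pos _).le, ← Real.exp_mul] at h2
  have h3 : 1 + s * u ≤ Real.exp (-u * -s) := by
    linarith [Real.add_one_le_exp (-u * -s)]
  have hdn : 0 < d ^ (-s) := Real.rpow_pos_of_pos hd _
  have h4 : d ^ (-s) * (s * u) = s * a := by
    rw [hu, Real.rpow_neg hd.le]; field_simp
  nlinarith [mul_le_mul_of_nonneg_left h3 hdn.le]

/-- The factor `1 / 2` absorbs the shift by `k₁`: `k - k₁ ≥ k / 2` once `k ≥ 2 * k₁`. -/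
lemma recursion_rate (d : ℕ → ℝ) (hd : ∀ k, 0 < d k) (a s : ℝ) (ha : 0 < a) (hs : 0 < s) (k₁ : ℕ)
    (h : ∀ k, k₁ ≤ k → d (k + 1) ≤ d k - a * d k ^ (1 + s)) (k : ℕ) (hk : 2 * k₁ + 1 ≤ k) :
    d k ≤ (s * a / 2) ^ (-(1 / s)) * (k : ℝ) ^ (-(1 / s)) := by
  have key : ∀ m, k₁ ≤ m → s * a * ((m : ℝ) - k₁) ≤ d m ^ (-s) := by
    intro m hm
    induction m, hm using Nat.le_induction with
    | base => simpa using Real.rpow_nonneg (hd k₁).le _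
    | succ m hm ih =>
      have := rpow_neg_growth (hd m) (hd (m + 1)) hs (h m hm)
      push_cast
      linarith
  have hk' : (2 * k₁ + 1 : ℝ) ≤ k := by exact_mod_cast hk
  have hk0 : (0 : ℝ) < k := by
    have : (0 : ℝ) ≤ k₁ := Nat.cast_nonneg _
    linarith
  have hsa : 0 < s * a := mul_pos hs ha
  have h1 : s * a / 2 * k ≤ d k ^ (-s) := by
    refine le_trans ?_ (key k (by omega))
    nlinarith
  have h2 := Real.rpow_le_rpow_of_nonpos (by positivity) h1
    (show -(1 / s) ≤ 0 by rw [neg_nonpos]; positivity)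
  rw [← Real.rpow_mul (hd k).le, Real.mul_rpow (by positivity) hk0.le] at h2
  have : -s * -(1 / s) = 1 := by field_simp
  rwa [this, Real.rpow_one] at h2

/-- Under the generalized descent condition, the step bound, and the
KL inequality at a cluster point `x̄` with exponent `ϑ` satisfying `θ > 1/ϑ`, the
function gap, gradient norms, and distances to `x̄` converge sublinearly with the
stated power rates. -/
theorem deal_sublinear_rates {n : ℕ} (f : EuclideanSpace ℝ (Fin n) → ℝ)
    (hf : ContDiff ℝ 1 f) (hbdd : BddBelow (Set.range f))
    (fStar : ℝ) (hfStar : fStar = ⨅ y, f y)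
    (ρ θ : ℝ) (hρ : 0 < ρ) (hθ : 1 < θ)
    (x : ℕ → EuclideanSpace ℝ (Fin n))
    (hdesc : ∀ k : ℕ, f (x (k + 1)) ≤ f (x k) - ρ * ‖gradient f (x k)‖ ^ θ)
    (xbar : EuclideanSpace ℝ (Fin n))
    (hcluster : ∃ φ : ℕ → ℕ, StrictMono φ ∧ Tendsto (fun j => x (φ j)) atTop (𝓝 xbar))
    (c : ℝ) (hc : 0 < c) (K : ℕ)
    (hstep : ∀ k : ℕ, K ≤ k → ‖x (k + 1) - x k‖ ≤ c * ‖gradient f (x k)‖ ^ (θ - 1))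
    (ϑ τ : ℝ) (hϑ : ϑ ∈ Set.Ioo (0 : ℝ) 1) (hτ : 0 < τ) (hθϑ : 1 / ϑ < θ)
    (hKL : ∃ r ξ : ℝ, 0 < r ∧ 0 < ξ ∧ ∀ y : EuclideanSpace ℝ (Fin n),
      ‖y - xbar‖ < r → f xbar < f y → f y < f xbar + ξ →
        (f y - f xbar) ^ ϑ ≤ τ * ‖gradient f y‖) :
    ∃ μ : ℝ, 0 < μ ∧ ∃ k₀ : ℕ, ∀ k : ℕ, k₀ ≤ k →
      f (x k) - f xbar ≤ μ * (k : ℝ) ^ (-(1 / (ϑ * θ - 1))) ∧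
      ‖gradient f (x k)‖ ≤ (μ / ρ) ^ (1 / θ) * (k : ℝ) ^ (-(1 / (θ * (ϑ * θ - 1)))) ∧
      ‖x k - xbar‖ ≤ c * τ * ρ⁻¹ * (1 - ϑ)⁻¹ * μ ^ (1 - ϑ) *
        (k : ℝ) ^ (-((1 - ϑ) / (ϑ * θ - 1))) := by
  obtain ⟨φ, hφ, hlim⟩ := hcluster
  obtain ⟨r, ξ, hr, hξ, hKL⟩ := hKL
  obtain ⟨h0, h1⟩ := hϑ
  have hs : 0 < ϑ * θ - 1 := by
    rw [div_lt_iff₀ h0] at hθϑ; linarith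
  have hθ0 : 0 < θ := by linarith
  have hϑ1 : 0 < 1 - ϑ := by linarith
  set g : ℕ → ℝ := fun k => ‖gradient f (x k)‖ with hgdef
  have hg : ∀ k, 0 ≤ g k := fun k => norm_nonneg _
  set d : ℕ → ℝ := fun k => f (x k) - f xbar with hddef
  have hd' : ∀ k, d (k + 1) ≤ d k - ρ * g k ^ θ := fun k => by
    have := hdesc k
    simp only [hddef, hgdef]; linarith
  have hanti : Antitone d := antitone_nat_of_succ_le fun k => by
    have := hd' k
    have : 0 ≤ ρ * g k ^ θ := mul_nonneg hρ.le (Real.rpow_nonneg (hg k) _)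
    linarith
  have hdφ : Tendsto (fun j => d (φ j)) atTop (𝓝 0) := by
    have := ((hf.continuous.tendsto xbar).comp hlim).sub_const (f xbar)
    simpa [hddef, Function.comp_def] using this
  have hd0 : ∀ k, 0 ≤ d k := fun k => by
    refine le_of_tendsto hdφ ?_
    filter_upwards [eventually_ge_atTop k] with j hj
    exact hanti (hj.trans (hφ.id_le j))
  set C := c * τ * ρ⁻¹ * (1 - ϑ)⁻¹ with hC
  have hC0 : 0 < C := by positivity
  have hpow : Tendsto (fun j => d (φ j) ^ (1 - ϑ)) atTop (𝓝 0) := by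
    have := hdφ.rpow_const (p := 1 - ϑ) (Or.inr hϑ1.le)
    rwa [Real.zero_rpow hϑ1.ne'] at this
  -- An index from which the iterates are trapped in the region where the KL inequality holds.
  obtain ⟨k₁, hk₁K, hk₁ξ, hk₁r⟩ : ∃ k₁, K ≤ k₁ ∧ d k₁ < ξ ∧
      ‖x k₁ - xbar‖ + C * d k₁ ^ (1 - ϑ) < r := by
    have hsum : Tendsto (fun j => ‖x (φ j) - xbar‖ + C * d (φ j) ^ (1 - ϑ)) atTop (𝓝 0) := by
      have := (hlim.sub_const xbar).norm.add (hpow.const_mul C)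
      simpa using this
    obtain ⟨j, h1, h2, h3⟩ := ((hdφ.eventually_lt_const hξ).and
      ((hsum.eventually_lt_const hr).and (eventually_ge_atTop K))).exists
    exact ⟨φ j, h3.trans (hφ.id_le j), h1, h2⟩
  have hKL' : ∀ k, k₁ ≤ k → ‖x k - xbar‖ < r → 0 < d k → d k ^ ϑ ≤ τ * g k := by
    intro k hk hkr hdk
    have h2 : d k < ξ := (hanti hk).trans_lt hk₁ξ
    refine hKL (x k) hkr ?_ ?_
    · simp only [hddef] at hdk; linarith
    · simp only [hddef] at h2; linarith
  have hst : ∀ k, k₁ ≤ k → ‖x k - xbar‖ < r →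
      ‖x (k + 1) - x k‖ ≤ C * d k ^ (1 - ϑ) - C * d (k + 1) ^ (1 - ϑ) := by
    intro k hk hkr
    rw [← mul_sub]
    exact kl_step (hd0 k) (hd0 (k + 1)) (hg k) hρ hθ hc h0 h1 hτ (hd' k)
      (hstep k (hk₁K.trans hk)) (hKL' k hk hkr)
  have hp0 : ∀ k, 0 ≤ C * d k ^ (1 - ϑ) := fun k =>
    mul_nonneg hC0.le (Real.rpow_nonneg (hd0 k) _)
  have htrap := kl_trapped x xbar (fun k => C * d k ^ (1 - ϑ)) hp0 r k₁ hk₁r hst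
  have hdist : ∀ k, k₁ ≤ k → ‖x k - xbar‖ ≤ C * d k ^ (1 - ϑ) := by
    intro k hk
    rw [norm_sub_rev]
    refine le_of_tendsto (hlim.sub_const (x k)).norm ?_
    filter_upwards [eventually_ge_atTop k] with j hj
    have := path_length x (fun k => C * d k ^ (1 - ϑ)) k₁
      (fun k hk => hst k hk (htrap k hk)) k (φ j) hk (hj.trans (hφ.id_le j))
    have := hp0 (φ j)
    linarith
  -- The gap rate alone suffices.
  suffices hrate : ∃ μ : ℝ, 0 < μ ∧ ∃ k₀ : ℕ, ∀ k : ℕ, k₀ ≤ k →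
      d k ≤ μ * (k : ℝ) ^ (-(1 / (ϑ * θ - 1))) by
    obtain ⟨μ, hμ, k₀, hk₀⟩ := hrate
    refine ⟨μ, hμ, max k₀ k₁, fun k hk => ?_⟩
    have hdk := hk₀ k (le_of_max_le_left hk)
    have hkk : (0 : ℝ) ≤ k := Nat.cast_nonneg _
    have hkp : (0 : ℝ) ≤ (k : ℝ) ^ (-(1 / (ϑ * θ - 1))) := Real.rpow_nonneg hkk _
    refine ⟨hdk, ?_, ?_⟩
    · have e1 : g k ^ θ ≤ μ / ρ * (k : ℝ) ^ (-(1 / (ϑ * θ - 1))) := by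
        rw [div_mul_eq_mul_div, le_div_iff₀ hρ]
        linarith [hd' k, hd0 (k + 1)]
      have e2 := Real.rpow_le_rpow (Real.rpow_nonneg (hg k) _) e1 (by positivity : 0 ≤ 1 / θ)
      rw [← Real.rpow_mul (hg k), mul_one_div_cancel hθ0.ne', Real.rpow_one,
        Real.mul_rpow (by positivity) hkp, ← Real.rpow_mul hkk] at e2
      have e3 : -(1 / (ϑ * θ - 1)) * (1 / θ) = -(1 / (θ * (ϑ * θ - 1))) := by
        field_simp
      rwa [e3] at e2
    · refine (hdist k (le_of_max_le_right hk)).trans ?_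
      have e2 := Real.rpow_le_rpow (hd0 k) hdk hϑ1.le
      rw [Real.mul_rpow hμ.le hkp, ← Real.rpow_mul hkk] at e2
      have e3 : -(1 / (ϑ * θ - 1)) * (1 - ϑ) = -((1 - ϑ) / (ϑ * θ - 1)) := by
        field_simp
      rw [e3] at e2
      exact (mul_le_mul_of_nonneg_left e2 hC0.le).trans_eq (mul_assoc _ _ _).symm
  by_cases hz : ∃ m, d m = 0
  · obtain ⟨m, hm⟩ := hz
    refine ⟨1, one_pos, m, fun k hk => ?_⟩
    have : d k ≤ 0 := (hanti hk).trans hm.le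
    exact this.trans (mul_nonneg zero_le_one (Real.rpow_nonneg (Nat.cast_nonneg _) _))
  · push Not at hz
    have hdpos : ∀ k, 0 < d k := fun k => lt_of_le_of_ne (hd0 k) (hz k).symm
    have ha : 0 < ρ / τ ^ θ := div_pos hρ (Real.rpow_pos_of_pos hτ _)
    have hsa : 0 < (ϑ * θ - 1) * (ρ / τ ^ θ) / 2 := by positivity
    refine ⟨((ϑ * θ - 1) * (ρ / τ ^ θ) / 2) ^ (-(1 / (ϑ * θ - 1))),
      Real.rpow_pos_of_pos hsa _, 2 * k₁ + 1, fun k hk => ?_⟩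
    refine recursion_rate d hdpos _ _ ha hs k₁ (fun k hk => ?_) k hk
    refine (hd' k).trans ?_
    have e1 := Real.rpow_le_rpow (Real.rpow_nonneg (hd0 k) _)
      (hKL' k hk (htrap k hk) (hdpos k)) hθ0.le
    rw [← Real.rpow_mul (hd0 k), Real.mul_rpow hτ.le (hg k)] at e1
    have e2 : ρ / τ ^ θ * d k ^ (1 + (ϑ * θ - 1)) ≤ ρ * g k ^ θ := by
      rw [add_sub_cancel, div_mul_eq_mul_div, div_le_iff₀ (Real.rpow_pos_of_pos hτ _)]
      nlinarith
    linarith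
end

section
/- Suppose f satisfies the global KL inequality with exponent ϑ ∈ (0,1) and constant τ > 0, and let (x^k) satisfy the generalized descent condition. Then f(x^k) → f* as k → ∞, and every cluster point of (x^k) is a global minimizer of f. -/
/-!
The values `f (x k)` decrease and are bounded below by `fStar`, so they converge to some
`L ≥ fStar`. The KL inequality turns the descent condition into
`ρ * ((f (x k) - fStar) ^ ϑ / τ) ^ θ ≤ f (x k) - f (x (k + 1))`; passing to the limit gives
`ρ * ((L - fStar) ^ ϑ / τ) ^ θ ≤ 0`, which forces `L = fStar`. By continuity, `f` equals
`fStar` at every cluster point.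
-/

open Filter Topology

/-- Under the global KL inequality and the generalized descent
condition, the function values converge to the infimum `f*`, and every cluster point
of the sequence is a global minimizer of `f`. -/
theorem deal_global_KL_value_convergence {n : ℕ} (f : EuclideanSpace ℝ (Fin n) → ℝ)
    (hf : ContDiff ℝ 1 f) (hbdd : BddBelow (Set.range f))
    (fStar : ℝ) (hfStar : fStar = ⨅ y, f y)
    (ρ θ : ℝ) (hρ : 0 < ρ) (hθ : 1 < θ)
    (ϑ τ : ℝ) (hϑ : ϑ ∈ Set.Ioo (0 : ℝ) 1) (hτ : 0 < τ)
    (hKL : ∀ y : EuclideanSpace ℝ (Fin n), (f y - fStar) ^ ϑ ≤ τ * ‖gradient f y‖)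
    (x : ℕ → EuclideanSpace ℝ (Fin n))
    (hdesc : ∀ k : ℕ, f (x (k + 1)) ≤ f (x k) - ρ * ‖gradient f (x k)‖ ^ θ) :
    Tendsto (fun k => f (x k)) atTop (𝓝 fStar) ∧
    ∀ xbar : EuclideanSpace ℝ (Fin n),
      (∃ φ : ℕ → ℕ, StrictMono φ ∧ Tendsto (fun j => x (φ j)) atTop (𝓝 xbar)) →
        ∀ y, f xbar ≤ f y := by
  obtain ⟨hϑ0, -⟩ := hϑ
  have hθ0 : 0 < θ := by linarith
  have hlow : ∀ y, fStar ≤ f y := fun y => hfStar ▸ ciInf_le hbdd y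
  have hanti : Antitone fun k => f (x k) := antitone_nat_of_succ_le fun k => by
    have : 0 ≤ ρ * ‖gradient f (x k)‖ ^ θ := by positivity
    linarith [hdesc k]
  obtain ⟨L, hL⟩ : ∃ L, Tendsto (fun k => f (x k)) atTop (𝓝 L) :=
    ⟨_, tendsto_atTop_ciInf hanti ⟨fStar, by rintro _ ⟨k, rfl⟩; exact hlow _⟩⟩
  have hLlow : fStar ≤ L := ge_of_tendsto' hL fun k => hlow _
  have hstep : ∀ k, ρ * ((f (x k) - fStar) ^ ϑ / τ) ^ θ ≤ f (x k) - f (x (k + 1)) := by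
    intro k
    have hnonneg : 0 ≤ (f (x k) - fStar) ^ ϑ :=
      Real.rpow_nonneg (sub_nonneg.2 (hlow _)) _
    have hgrad : (f (x k) - fStar) ^ ϑ / τ ≤ ‖gradient f (x k)‖ := by
      rw [div_le_iff₀' hτ]
      exact hKL _
    have hpow := Real.rpow_le_rpow (div_nonneg hnonneg hτ.le) hgrad hθ0.le
    have := mul_le_mul_of_nonneg_left hpow hρ.le
    linarith [hdesc k]
  have hleft : Tendsto (fun k => ρ * ((f (x k) - fStar) ^ ϑ / τ) ^ θ) atTop
      (𝓝 (ρ * ((L - fStar) ^ ϑ / τ) ^ θ)) :=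
    ((((hL.sub_const fStar).rpow_const (Or.inr hϑ0.le)).div_const τ).rpow_const
      (Or.inr hθ0.le)).const_mul ρ
  have hright : Tendsto (fun k => f (x k) - f (x (k + 1))) atTop (𝓝 (L - L)) :=
    hL.sub (hL.comp (tendsto_add_atTop_nat 1))
  have hlim := le_of_tendsto_of_tendsto' hleft hright hstep
  have hLeq : L = fStar := by
    by_contra hne
    have hgap : 0 < L - fStar := sub_pos.2 (lt_of_le_of_ne hLlow (Ne.symm hne))
    have : 0 < ρ * ((L - fStar) ^ ϑ / τ) ^ θ := by positivity
    linarith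
  subst hLeq
  refine ⟨hL, ?_⟩
  rintro xbar ⟨φ, hφ, hx⟩ y
  have hxbar : f xbar = L := tendsto_nhds_unique
    ((hf.continuous.tendsto xbar).comp hx) (hL.comp hφ.tendsto_atTop)
  exact hxbar ▸ hlow y
end

section
/- Suppose f satisfies the global KL inequality with exponent ϑ ∈ (0,1) and constant τ > 0, let (x^k) satisfy the generalized descent condition, and suppose there exists c > 0 such that ‖x^{k+1} − x^k‖ ≤ c‖∇f(x^k)‖^{θ−1} for all k ∈ ℕ. Then ∑_{k=0}^∞ ‖x^{k+1} − x^k‖ ≤ (cτ/(ρ(1−ϑ))) (f(x^0) − f*)^{1−ϑ} < ∞, and the sequence (x^k) converges to a point x* with f(x*) = f* (a global minimizer of f). -/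
/-!
Writing `a k = f (x k) - fStar` and `g k = ‖∇f (x k)‖`, the desingularizing function `t ↦ t ^ (1 - ϑ)`
turns each step length into a telescoping term: concavity (in the form of the weighted AM-GM
inequality), the descent condition and the KL inequality give
`c * g k ^ (θ - 1) ≤ C * (a k ^ (1 - ϑ) - a (k + 1) ^ (1 - ϑ))` with `C = c * τ / (ρ * (1 - ϑ))`;
this is `step_le_telescoping`. Hence the sequence has finite length at most `C * a 0 ^ (1 - ϑ)`, and
it converges. Passing to the limit in the descent condition, using continuity of `f` and `∇f`, shows
that the limit is a critical point, and the KL inequality makes every critical point a global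
minimizer.
-/

open Filter Topology

/-- One step of the argument, for real numbers: `a`, `b` are consecutive optimality gaps and `g` is
the gradient norm at the first of the two points. -/
lemma step_le_telescoping {a b g ρ θ ϑ τ c : ℝ} (ha : 0 ≤ a) (hb : 0 ≤ b) (hg : 0 ≤ g)
    (hρ : 0 < ρ) (hθ : 1 < θ) (hϑ0 : 0 < ϑ) (hϑ1 : ϑ < 1) (hτ : 0 < τ) (hc : 0 < c)
    (hKL : a ^ ϑ ≤ τ * g) (hdesc : b ≤ a - ρ * g ^ θ) :
    c * g ^ (θ - 1) ≤ c * τ / (ρ * (1 - ϑ)) * (a ^ (1 - ϑ) - b ^ (1 - ϑ)) := by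
  have hs : 0 < 1 - ϑ := by linarith
  have hgθ : 0 ≤ g ^ θ := Real.rpow_nonneg hg θ
  have hba : b ≤ a := by nlinarith
  have hpow : b ^ (1 - ϑ) ≤ a ^ (1 - ϑ) := Real.rpow_le_rpow hb hba hs.le
  rcases hg.eq_or_lt with h0 | hgpos
  · rw [← h0, Real.zero_rpow (by linarith), mul_zero]
    exact mul_nonneg (by positivity) (by linarith)
  have hamgm : a ^ ϑ * b ^ (1 - ϑ) ≤ ϑ * a + (1 - ϑ) * b :=
    Real.geom_mean_le_arith_mean2_weighted hϑ0.le hs.le ha hb (by ring)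
  have haa : a ^ ϑ * a ^ (1 - ϑ) = a := by
    rw [← Real.rpow_add' ha (by norm_num)]
    norm_num
  have hgg : g ^ θ = g * g ^ (θ - 1) := by
    rw [← Real.rpow_one_add' hg (by linarith)]
    norm_num
  have hmul : a ^ ϑ * (a ^ (1 - ϑ) - b ^ (1 - ϑ)) ≤ τ * g * (a ^ (1 - ϑ) - b ^ (1 - ϑ)) :=
    mul_le_mul_of_nonneg_right hKL (by linarith)
  have hgap : (1 - ϑ) * (ρ * g ^ θ) ≤ (1 - ϑ) * (a - b) :=
    mul_le_mul_of_nonneg_left (by linarith) hs.le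
  rw [hgg] at hgap
  have hcancel : ρ * (1 - ϑ) * g ^ (θ - 1) ≤ τ * (a ^ (1 - ϑ) - b ^ (1 - ϑ)) := by
    refine le_of_mul_le_mul_left ?_ hgpos
    linarith
  rw [div_mul_eq_mul_div, le_div_iff₀ (by positivity)]
  have := mul_le_mul_of_nonneg_left hcancel hc.le
  linarith

/-- Under the global KL inequality, the generalized descent condition,
and the step bound `‖x^{k+1} − x^k‖ ≤ c‖∇f(x^k)‖^{θ−1}`, the sequence has finite
length with the stated bound and converges to a global minimizer of `f`. -/
theorem deal_global_KL_iterate_convergence {n : ℕ} (f : EuclideanSpace ℝ (Fin n) → ℝ)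
    (hf : ContDiff ℝ 1 f) (hbdd : BddBelow (Set.range f))
    (fStar : ℝ) (hfStar : fStar = ⨅ y, f y)
    (ρ θ : ℝ) (hρ : 0 < ρ) (hθ : 1 < θ)
    (ϑ τ : ℝ) (hϑ : ϑ ∈ Set.Ioo (0 : ℝ) 1) (hτ : 0 < τ)
    (hKL : ∀ y : EuclideanSpace ℝ (Fin n), (f y - fStar) ^ ϑ ≤ τ * ‖gradient f y‖)
    (x : ℕ → EuclideanSpace ℝ (Fin n))
    (hdesc : ∀ k : ℕ, f (x (k + 1)) ≤ f (x k) - ρ * ‖gradient f (x k)‖ ^ θ)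
    (c : ℝ) (hc : 0 < c)
    (hstep : ∀ k : ℕ, ‖x (k + 1) - x k‖ ≤ c * ‖gradient f (x k)‖ ^ (θ - 1)) :
    (Summable fun k : ℕ => ‖x (k + 1) - x k‖) ∧
    (∑' k : ℕ, ‖x (k + 1) - x k‖) ≤
      c * τ / (ρ * (1 - ϑ)) * (f (x 0) - fStar) ^ (1 - ϑ) ∧
    ∃ xstar : EuclideanSpace ℝ (Fin n),
      Tendsto x atTop (𝓝 xstar) ∧ f xstar = fStar := by
  obtain ⟨hϑ0, hϑ1⟩ := hϑ
  have hs : 0 < 1 - ϑ := by linarith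
  have hge : ∀ y, fStar ≤ f y := fun y => hfStar ▸ ciInf_le hbdd y
  have hgap : ∀ y, 0 ≤ f y - fStar := fun y => sub_nonneg.2 (hge y)
  set C := c * τ / (ρ * (1 - ϑ)) with hC
  have hC0 : 0 ≤ C := by positivity
  have hpartial : ∀ N : ℕ, ∑ k ∈ Finset.range N, ‖x (k + 1) - x k‖ ≤
      C * (f (x 0) - fStar) ^ (1 - ϑ) := by
    intro N
    calc ∑ k ∈ Finset.range N, ‖x (k + 1) - x k‖
        ≤ ∑ k ∈ Finset.range N, (C * (f (x k) - fStar) ^ (1 - ϑ)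
            - C * (f (x (k + 1)) - fStar) ^ (1 - ϑ)) := by
          refine Finset.sum_le_sum fun k _ => (hstep k).trans ?_
          rw [← mul_sub]
          exact step_le_telescoping (hgap _) (hgap _) (norm_nonneg _) hρ hθ hϑ0 hϑ1 hτ hc
            (hKL (x k)) (by linarith [hdesc k])
      _ = C * (f (x 0) - fStar) ^ (1 - ϑ) - C * (f (x N) - fStar) ^ (1 - ϑ) :=
          Finset.sum_range_sub' (fun k => C * (f (x k) - fStar) ^ (1 - ϑ)) N
      _ ≤ C * (f (x 0) - fStar) ^ (1 - ϑ) :=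
          sub_le_self _ (mul_nonneg hC0 (Real.rpow_nonneg (hgap _) _))
  have hsum : Summable fun k : ℕ => ‖x (k + 1) - x k‖ :=
    summable_of_sum_range_le (fun _ => norm_nonneg _) hpartial
  refine ⟨hsum, Real.tsum_le_of_sum_range_le (fun _ => norm_nonneg _) hpartial, ?_⟩
  obtain ⟨xstar, hx⟩ := cauchySeq_tendsto_of_complete
    (cauchySeq_of_summable_dist (f := x) (by simpa only [dist_eq_norm'] using hsum))
  refine ⟨xstar, hx, ?_⟩
  have hgrad : Continuous (gradient f) :=
    (LinearIsometryEquiv.continuous _).comp (hf.continuous_fderiv one_ne_zero)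
  have hlim : f xstar ≤ f xstar - ρ * ‖gradient f xstar‖ ^ θ := by
    have hrhs : Continuous fun y => f y - ρ * ‖gradient f y‖ ^ θ :=
      hf.continuous.sub (continuous_const.mul
        (hgrad.norm.rpow_const fun _ => Or.inr (by linarith)))
    exact le_of_tendsto_of_tendsto'
      ((hf.continuous.tendsto xstar).comp (hx.comp (tendsto_add_atTop_nat 1)))
      ((hrhs.tendsto xstar).comp hx) hdesc
  have hcrit : ‖gradient f xstar‖ = 0 := by
    by_contra hne
    have hpos : 0 < ‖gradient f xstar‖ := lt_of_le_of_ne (norm_nonneg _) (Ne.symm hne)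
    have := mul_pos hρ (Real.rpow_pos_of_pos hpos θ)
    linarith
  have hzero := hKL xstar
  rw [hcrit, mul_zero] at hzero
  by_contra hne
  have hpos : 0 < f xstar - fStar := lt_of_le_of_ne (hgap _) fun h => hne (by linarith)
  linarith [Real.rpow_pos_of_pos hpos ϑ]
end

section
/- Suppose f satisfies the global KL inequality with exponent ϑ ∈ (0,1) and constant τ > 0, let (x^k) satisfy the generalized descent condition with θ = 1/ϑ, and suppose there exists c > 0 such that ‖x^{k+1} − x^k‖ ≤ c‖∇f(x^k)‖^{θ−1} for all k ∈ ℕ. Then ρ ≤ τ^θ and, setting q := 1 − ρ/τ^θ, for every k ∈ ℕ: f(x^k) − f* ≤ q^k (f(x^0) − f*), ‖∇f(x^k)‖ ≤ ((f(x^0) − f*)/ρ)^{1/θ} q^{k/θ}, and, denoting by x* the limit of (x^k), ‖x^k − x*‖ ≤ (c/(1 − q^{(θ−1)/θ})) ((f(x^0) − f*)/ρ)^{(θ−1)/θ} q^{k(θ−1)/θ}. -/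
/-!
Write `r k = f (x k) - fStar ≥ 0`, `g k = ‖gradient f (x k)‖` and `q = 1 - ρ / τ ^ θ`. Raising the KL inequality to the
power `θ = 1/ϑ` gives `r k ≤ τ ^ θ * g k ^ θ`, while descent gives
`ρ * g k ^ θ ≤ r k - r (k + 1) ≤ r k`. Comparing the two at `k = 0`, where `r 0 > 0`, yields
`ρ ≤ τ ^ θ`; combining them yields `r (k + 1) ≤ q * r k`, hence geometric decay of `r`, and
`g k ^ θ ≤ r k / ρ` transfers it to the gradients. The step bound then dominates the increments of
`x` by a geometric sequence of ratio `q ^ ((θ - 1) / θ) < 1`, so `x` is Cauchy and summing the tail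
gives the distance estimate.
-/

open Filter Topology

/-- Under the global KL inequality with exponent `ϑ`, the generalized
descent condition with `θ = 1/ϑ`, and the step bound, one has `ρ ≤ τ^θ` and, with
`q = 1 − ρ/τ^θ`, the function gap, gradient norms, and distances to the limit `x*`
all decay linearly with the stated constants, for every `k`. -/
theorem deal_global_KL_linear_rates {n : ℕ} (f : EuclideanSpace ℝ (Fin n) → ℝ)
    (hf : ContDiff ℝ 1 f) (hbdd : BddBelow (Set.range f))
    (fStar : ℝ) (hfStar : fStar = ⨅ y, f y)
    (ρ θ : ℝ) (hρ : 0 < ρ) (hθ : 1 < θ)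
    (ϑ τ : ℝ) (hϑ : ϑ ∈ Set.Ioo (0 : ℝ) 1) (hτ : 0 < τ) (hθϑ : θ = 1 / ϑ)
    (hKL : ∀ y : EuclideanSpace ℝ (Fin n), (f y - fStar) ^ ϑ ≤ τ * ‖gradient f y‖)
    (x : ℕ → EuclideanSpace ℝ (Fin n))
    (hdesc : ∀ k : ℕ, f (x (k + 1)) ≤ f (x k) - ρ * ‖gradient f (x k)‖ ^ θ)
    (c : ℝ) (hc : 0 < c)
    (hstep : ∀ k : ℕ, ‖x (k + 1) - x k‖ ≤ c * ‖gradient f (x k)‖ ^ (θ - 1))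
    (h0 : fStar < f (x 0)) :
    ρ ≤ τ ^ θ ∧
    ∃ xstar : EuclideanSpace ℝ (Fin n), Tendsto x atTop (𝓝 xstar) ∧
      ∀ k : ℕ,
        f (x k) - fStar ≤ (1 - ρ / τ ^ θ) ^ (k : ℝ) * (f (x 0) - fStar) ∧
        ‖gradient f (x k)‖ ≤
          ((f (x 0) - fStar) / ρ) ^ (1 / θ) * (1 - ρ / τ ^ θ) ^ ((k : ℝ) / θ) ∧
        ‖x k - xstar‖ ≤
          c / (1 - (1 - ρ / τ ^ θ) ^ ((θ - 1) / θ)) *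
            ((f (x 0) - fStar) / ρ) ^ ((θ - 1) / θ) *
            (1 - ρ / τ ^ θ) ^ ((k : ℝ) * (θ - 1) / θ) := by
  have hθ0 : 0 < θ := by linarith
  have hT : 0 < τ ^ θ := Real.rpow_pos_of_pos hτ θ
  have hr : ∀ y, 0 ≤ f y - fStar := fun y => by
    rw [hfStar]; exact sub_nonneg.2 (ciInf_le hbdd y)
  have hϑθ : ϑ * θ = 1 := by rw [hθϑ]; exact mul_one_div_cancel hϑ.1.ne'
  have hKLθ : ∀ y, f y - fStar ≤ τ ^ θ * ‖gradient f y‖ ^ θ := fun y => by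
    have h := Real.rpow_le_rpow (Real.rpow_nonneg (hr y) ϑ) (hKL y) hθ0.le
    rwa [← Real.rpow_mul (hr y), hϑθ, Real.rpow_one,
      Real.mul_rpow hτ.le (norm_nonneg _)] at h
  have hg : ∀ k, ρ * ‖gradient f (x k)‖ ^ θ ≤ f (x k) - fStar := fun k => by
    linarith [hdesc k, hr (x (k + 1))]
  have hρτ : ρ ≤ τ ^ θ := by
    have h1 := hKLθ (x 0)
    have h2 := hg 0
    have hpos : 0 < ‖gradient f (x 0)‖ ^ θ := by
      refine pos_of_mul_pos_right (a := τ ^ θ) ?_ hT.le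
      linarith
    exact le_of_mul_le_mul_right (h2.trans h1) hpos
  refine ⟨hρτ, ?_⟩
  set q : ℝ := 1 - ρ / τ ^ θ with hq
  have hq0 : 0 ≤ q := sub_nonneg.2 ((div_le_one hT).2 hρτ)
  have hq1 : q < 1 := sub_lt_self _ (div_pos hρ hT)
  have hcontr : ∀ k, f (x (k + 1)) - fStar ≤ q * (f (x k) - fStar) := fun k => by
    have h : ρ / τ ^ θ * (f (x k) - fStar) ≤ ρ * ‖gradient f (x k)‖ ^ θ := by
      calc ρ / τ ^ θ * (f (x k) - fStar)
          ≤ ρ / τ ^ θ * (τ ^ θ * ‖gradient f (x k)‖ ^ θ) :=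
            mul_le_mul_of_nonneg_left (hKLθ (x k)) (div_pos hρ hT).le
        _ = ρ * ‖gradient f (x k)‖ ^ θ := by rw [← mul_assoc, div_mul_cancel₀ _ hT.ne']
    rw [hq, sub_mul, one_mul]
    linarith [hdesc k]
  have hgap : ∀ k : ℕ, f (x k) - fStar ≤ q ^ (k : ℝ) * (f (x 0) - fStar) := fun k => by
    rw [Real.rpow_natCast]
    induction k with
    | zero => simp
    | succ k ih =>
      calc f (x (k + 1)) - fStar ≤ q * (f (x k) - fStar) := hcontr k
        _ ≤ q * (q ^ k * (f (x 0) - fStar)) := mul_le_mul_of_nonneg_left ih hq0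
        _ = q ^ (k + 1) * (f (x 0) - fStar) := by ring
  set A : ℝ := (f (x 0) - fStar) / ρ with hA
  have hA0 : 0 ≤ A := div_nonneg (hr _) hρ.le
  have hgrad : ∀ k : ℕ, ‖gradient f (x k)‖ ≤ A ^ (1 / θ) * q ^ ((k : ℝ) / θ) := fun k => by
    have h : ‖gradient f (x k)‖ ^ θ ≤ A * q ^ (k : ℝ) := by
      rw [hA, div_mul_eq_mul_div, le_div_iff₀ hρ]
      linarith [hg k, hgap k]
    have h' := Real.rpow_le_rpow (Real.rpow_nonneg (norm_nonneg _) θ) h (one_div_pos.2 hθ0).le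
    rwa [← Real.rpow_mul (norm_nonneg _), mul_one_div_cancel hθ0.ne', Real.rpow_one,
      Real.mul_rpow hA0 (Real.rpow_nonneg hq0 _), ← Real.rpow_mul hq0, mul_one_div] at h'
  set s : ℝ := q ^ ((θ - 1) / θ) with hs
  have hs1 : s < 1 := Real.rpow_lt_one hq0 hq1 (div_pos (by linarith) hθ0)
  have hspow : ∀ k : ℕ, q ^ ((k : ℝ) * (θ - 1) / θ) = s ^ k := fun k => by
    rw [hs, ← Real.rpow_natCast, ← Real.rpow_mul hq0]
    congr 1
    ring
  have hdist : ∀ k : ℕ, dist (x k) (x (k + 1)) ≤ (c * A ^ ((θ - 1) / θ)) * s ^ k := fun k => by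
    rw [dist_comm, dist_eq_norm]
    have h := Real.rpow_le_rpow (norm_nonneg _) (hgrad k) (show 0 ≤ θ - 1 by linarith)
    rw [Real.mul_rpow (Real.rpow_nonneg hA0 _) (Real.rpow_nonneg hq0 _), ← Real.rpow_mul hA0,
      ← Real.rpow_mul hq0, one_div_mul_eq_div, div_mul_eq_mul_div, hspow] at h
    calc ‖x (k + 1) - x k‖ ≤ c * ‖gradient f (x k)‖ ^ (θ - 1) := hstep k
      _ ≤ c * (A ^ ((θ - 1) / θ) * s ^ k) := mul_le_mul_of_nonneg_left h hc.le
      _ = _ := (mul_assoc _ _ _).symm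
  obtain ⟨xstar, hlim⟩ := cauchySeq_tendsto_of_complete (cauchySeq_of_le_geometric _ _ hs1 hdist)
  refine ⟨xstar, hlim, fun k => ⟨hgap k, hgrad k, ?_⟩⟩
  have h := dist_le_of_le_geometric_of_tendsto _ _ hs1 hdist hlim k
  rw [dist_eq_norm] at h
  rw [hspow]
  exact h.trans_eq (by ring)
end

section
/- Suppose f satisfies the global KL inequality with exponent ϑ ∈ (0,1) and constant τ > 0, let (x^k) satisfy the generalized descent condition with θ = 1/ϑ, suppose there exists c > 0 such that ‖x^{k+1} − x^k‖ ≤ c‖∇f(x^k)‖^{θ−1} for all k ∈ ℕ, and set q := 1 − ρ/τ^θ, assumed to lie in (0,1). Then for every accuracy ε > 0 and every k ∈ ℕ with k ≥ (log(1/ε) + log(f(x^0) − f*))/log(1/q) + 1, one has f(x^k) − f* ≤ ε. -/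
open Filter Topology Real

/-!
Raising the KL inequality to the power `θ = 1/ϑ` gives `f y - f* ≤ τ^θ ‖∇f y‖^θ`. Inserted into
the descent condition, this contracts the gap by the factor `q = 1 - ρ/τ^θ` at every step, so
`f (x k) - f* ≤ q^k (f (x 0) - f*)`. Taking logarithms, the right-hand side is at most `ε` as soon
as `k ≥ (log (1/ε) + log (f (x 0) - f*)) / log (1/q)`.
-/

/-- Complexity bound on the function-value gap: under the global KL
inequality with `θ = 1/ϑ` and `q = 1 − ρ/τ^θ ∈ (0,1)`, once
`k ≥ (log(1/ε) + log(f(x⁰) − f*))/log(1/q) + 1`, one has `f(x^k) − f* ≤ ε`. -/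
theorem deal_complexity_function_gap {n : ℕ} (f : EuclideanSpace ℝ (Fin n) → ℝ)
    (hf : ContDiff ℝ 1 f) (hbdd : BddBelow (Set.range f))
    (fStar : ℝ) (hfStar : fStar = ⨅ y, f y)
    (ρ θ : ℝ) (hρ : 0 < ρ) (hθ : 1 < θ)
    (ϑ τ : ℝ) (hϑ : ϑ ∈ Set.Ioo (0 : ℝ) 1) (hτ : 0 < τ) (hθϑ : θ = 1 / ϑ)
    (hKL : ∀ y : EuclideanSpace ℝ (Fin n), (f y - fStar) ^ ϑ ≤ τ * ‖gradient f y‖)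
    (x : ℕ → EuclideanSpace ℝ (Fin n))
    (hdesc : ∀ k : ℕ, f (x (k + 1)) ≤ f (x k) - ρ * ‖gradient f (x k)‖ ^ θ)
    (c : ℝ) (hc : 0 < c)
    (hstep : ∀ k : ℕ, ‖x (k + 1) - x k‖ ≤ c * ‖gradient f (x k)‖ ^ (θ - 1))
    (h0 : fStar < f (x 0))
    (hq0 : 0 < 1 - ρ / τ ^ θ) (hq1 : 1 - ρ / τ ^ θ < 1) :
    ∀ ε : ℝ, 0 < ε → ∀ k : ℕ,
      (Real.log (1 / ε) + Real.log (f (x 0) - fStar)) /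
          Real.log (1 / (1 - ρ / τ ^ θ)) + 1 ≤ (k : ℝ) →
        f (x k) - fStar ≤ ε := by
  intro ε hε k hk
  have hgap : ∀ y, 0 ≤ f y - fStar := fun y => by
    rw [hfStar]
    exact sub_nonneg.2 (ciInf_le hbdd y)
  have hτθ : 0 < τ ^ θ := Real.rpow_pos_of_pos hτ θ
  -- Raising the KL inequality to the power `θ = 1/ϑ` makes the gap appear linearly.
  have hKL' : ∀ y, f y - fStar ≤ τ ^ θ * ‖gradient f y‖ ^ θ := fun y => by
    have h := Real.rpow_le_rpow (Real.rpow_nonneg (hgap y) ϑ) (hKL y) (by linarith : 0 ≤ θ)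
    rwa [← Real.rpow_mul (hgap y), hθϑ, mul_one_div_cancel hϑ.1.ne', Real.rpow_one, ← hθϑ,
      Real.mul_rpow hτ.le (norm_nonneg _)] at h
  set q := 1 - ρ / τ ^ θ with hq
  have hcontr : ∀ j, f (x (j + 1)) - fStar ≤ q * (f (x j) - fStar) := fun j => by
    have h1 : ρ / τ ^ θ * (f (x j) - fStar) ≤ ρ * ‖gradient f (x j)‖ ^ θ := by
      calc ρ / τ ^ θ * (f (x j) - fStar)
          ≤ ρ / τ ^ θ * (τ ^ θ * ‖gradient f (x j)‖ ^ θ) := by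
            gcongr
            exact hKL' _
        _ = ρ * ‖gradient f (x j)‖ ^ θ := by field_simp
    have h2 := hdesc j
    rw [hq, sub_mul, one_mul]
    linarith
  have hgeo : ∀ j : ℕ, f (x j) - fStar ≤ q ^ j * (f (x 0) - fStar) := fun j => by
    induction j with
    | zero => simp
    | succ j ih =>
      calc f (x (j + 1)) - fStar ≤ q * (f (x j) - fStar) := hcontr j
        _ ≤ q * (q ^ j * (f (x 0) - fStar)) := by gcongr
        _ = q ^ (j + 1) * (f (x 0) - fStar) := by ring
  have hG : 0 < f (x 0) - fStar := sub_pos.2 h0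
  refine (hgeo k).trans ?_
  have hlogq : 0 < Real.log (1 / q) := Real.log_pos (by rw [lt_div_iff₀ hq0]; linarith)
  have hk' : (Real.log (1 / ε) + Real.log (f (x 0) - fStar)) / Real.log (1 / q) ≤ k := by
    linarith
  rw [div_le_iff₀ hlogq, one_div, one_div, Real.log_inv, Real.log_inv] at hk'
  rw [← Real.log_le_log_iff (mul_pos (pow_pos hq0 k) hG) hε,
    Real.log_mul (pow_pos hq0 k).ne' hG.ne', Real.log_pow]
  linarith
end

section
/- Suppose f satisfies the global KL inequality with exponent ϑ ∈ (0,1) and constant τ > 0, let (x^k) satisfy the generalized descent condition with θ = 1/ϑ, suppose there exists c > 0 such that ‖x^{k+1} − x^k‖ ≤ c‖∇f(x^k)‖^{θ−1} for all k ∈ ℕ, and set q := 1 − ρ/τ^θ, assumed to lie in (0,1). Then for every accuracy ε > 0 and every k ∈ ℕ with k ≥ (θ log(1/ε) + log((f(x^0) − f*)/ρ))/log(1/q) + 1, one has ‖∇f(x^k)‖ ≤ ε. -/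
open Filter Topology Real

/-!
Write `d k = f (x k) - fStar ≥ 0`. Raising the KL inequality to the power `θ = 1 / ϑ` gives
`d k ≤ τ ^ θ * ‖∇f(x k)‖ ^ θ`, so the descent condition yields `d (k + 1) ≤ q * d k` with
`q = 1 - ρ / τ ^ θ`, hence `d k ≤ q ^ k * d 0`. The descent condition and `d (k + 1) ≥ 0` also
give `ρ * ‖∇f(x k)‖ ^ θ ≤ d k`. If `‖∇f(x k)‖ > ε`, then `ρ * ε ^ θ ≤ q ^ k * d 0`, and taking
logarithms contradicts the lower bound on `k`.
-/

/-- Complexity bound on the gradient norm: under the global KL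
inequality with `θ = 1/ϑ` and `q = 1 − ρ/τ^θ ∈ (0,1)`, once
`k ≥ (θ log(1/ε) + log((f(x⁰) − f*)/ρ))/log(1/q) + 1`, one has `‖∇f(x^k)‖ ≤ ε`. -/
theorem deal_complexity_gradient {n : ℕ} (f : EuclideanSpace ℝ (Fin n) → ℝ)
    (hf : ContDiff ℝ 1 f) (hbdd : BddBelow (Set.range f))
    (fStar : ℝ) (hfStar : fStar = ⨅ y, f y)
    (ρ θ : ℝ) (hρ : 0 < ρ) (hθ : 1 < θ)
    (ϑ τ : ℝ) (hϑ : ϑ ∈ Set.Ioo (0 : ℝ) 1) (hτ : 0 < τ) (hθϑ : θ = 1 / ϑ)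
    (hKL : ∀ y : EuclideanSpace ℝ (Fin n), (f y - fStar) ^ ϑ ≤ τ * ‖gradient f y‖)
    (x : ℕ → EuclideanSpace ℝ (Fin n))
    (hdesc : ∀ k : ℕ, f (x (k + 1)) ≤ f (x k) - ρ * ‖gradient f (x k)‖ ^ θ)
    (c : ℝ) (hc : 0 < c)
    (hstep : ∀ k : ℕ, ‖x (k + 1) - x k‖ ≤ c * ‖gradient f (x k)‖ ^ (θ - 1))
    (h0 : fStar < f (x 0))
    (hq0 : 0 < 1 - ρ / τ ^ θ) (hq1 : 1 - ρ / τ ^ θ < 1) :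
    ∀ ε : ℝ, 0 < ε → ∀ k : ℕ,
      (θ * Real.log (1 / ε) + Real.log ((f (x 0) - fStar) / ρ)) /
          Real.log (1 / (1 - ρ / τ ^ θ)) + 1 ≤ (k : ℝ) →
        ‖gradient f (x k)‖ ≤ ε := by
  intro ε hε k hk
  have hd : ∀ y, 0 ≤ f y - fStar := fun y => by
    rw [hfStar]; exact sub_nonneg.2 (ciInf_le hbdd y)
  have hθ0 : 0 < θ := by linarith
  have hτθ : 0 < τ ^ θ := Real.rpow_pos_of_pos hτ θ
  have hKL' : ∀ y, f y - fStar ≤ τ ^ θ * ‖gradient f y‖ ^ θ := fun y => by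
    have h := Real.rpow_le_rpow (Real.rpow_nonneg (hd y) ϑ) (hKL y) hθ0.le
    rwa [← Real.rpow_mul (hd y), hθϑ, mul_one_div_cancel hϑ.1.ne', Real.rpow_one, ← hθϑ,
      Real.mul_rpow hτ.le (norm_nonneg _)] at h
  set q := 1 - ρ / τ ^ θ with hq
  have hlin : ∀ j, f (x j) - fStar ≤ q ^ j * (f (x 0) - fStar) := by
    intro j
    induction j with
    | zero => simp
    | succ j ih =>
      have h1 := mul_le_mul_of_nonneg_left (hKL' (x j)) (div_pos hρ hτθ).le
      rw [← mul_assoc, div_mul_cancel₀ _ hτθ.ne'] at h1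
      calc f (x (j + 1)) - fStar ≤ q * (f (x j) - fStar) := by
            rw [hq, sub_mul]; linarith [hdesc j]
        _ ≤ q * (q ^ j * (f (x 0) - fStar)) := mul_le_mul_of_nonneg_left ih hq0.le
        _ = q ^ (j + 1) * (f (x 0) - fStar) := by ring
  by_contra! hlt
  have hεθ : 0 < ε ^ θ := Real.rpow_pos_of_pos hε θ
  have hd0 : 0 < f (x 0) - fStar := sub_pos.2 h0
  -- The next value still lies above `fStar`, so `ρ‖∇f(x k)‖ ^ θ ≤ f (x k) - fStar`.
  have hbound : ρ * ε ^ θ ≤ q ^ k * (f (x 0) - fStar) := by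
    have h1 := mul_le_mul_of_nonneg_left (Real.rpow_le_rpow hε.le hlt.le hθ0.le) hρ.le
    linarith [hdesc k, hd (x (k + 1)), hlin k]
  have hlog := Real.log_le_log (mul_pos hρ hεθ) hbound
  rw [Real.log_mul hρ.ne' hεθ.ne', Real.log_rpow hε,
    Real.log_mul (pow_pos hq0 k).ne' hd0.ne', Real.log_pow] at hlog
  have hL : Real.log q < 0 := Real.log_neg hq0 hq1
  rw [one_div, one_div, Real.log_inv, Real.log_inv, Real.log_div hd0.ne' hρ.ne',
    ← le_sub_iff_add_le, div_le_iff₀ (neg_pos.2 hL)] at hk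
  -- The extra `1` in the lower bound on `k` makes the contradiction strict.
  linarith
end

section
/- Suppose f satisfies the global KL inequality with exponent ϑ ∈ (0,1) and constant τ > 0, let (x^k) satisfy the generalized descent condition with θ = 1/ϑ, suppose there exists c > 0 such that ‖x^{k+1} − x^k‖ ≤ c‖∇f(x^k)‖^{θ−1} for all k ∈ ℕ, and set q := 1 − ρ/τ^θ, assumed to lie in (0,1). Let x* denote the limit of (x^k) (which exists and is a global minimizer of f), and set s := (c/(1 − q^{(θ−1)/θ}))^{θ/(θ−1)}. Then for every accuracy ε > 0 and every k ∈ ℕ with k ≥ ((θ/(θ−1)) log(1/ε) + log(s(f(x^0) − f*)/ρ))/log(1/q) + 1, one has ‖x^k − x*‖ ≤ ε. -/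
/-!
Write `E k = f (x k) - f*`, `g k = ‖∇f (x k)‖`, `q = 1 - ρ / τ ^ θ` and `a = (θ - 1) / θ`.
The KL inequality gives `E k ≤ τ ^ θ * g k ^ θ`, so the descent condition contracts the values:
`E (k + 1) ≤ q * E k`, hence `E k ≤ q ^ k * E 0`. As `E (k + 1) ≥ 0`, the descent condition also
gives `g k ^ θ ≤ E k / ρ`, so the steps satisfy
`‖x (k + 1) - x k‖ ≤ c * g k ^ (θ - 1) ≤ c * (E 0 / ρ) ^ a * (q ^ a) ^ k`.
Summing the geometric tail, `‖x k - x*‖ ≤ c * (E 0 / ρ) ^ a * (q ^ a) ^ k / (1 - q ^ a)`, and the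
bound on `k` is what one gets by asking, after taking logarithms, that the right-hand side be at
most `ε`; the summand `+ 1` in that bound is slack.
-/

open Filter Topology Real

/-- Complexity bound on the distance to the limit: under the global
KL inequality with `θ = 1/ϑ` and `q = 1 − ρ/τ^θ ∈ (0,1)`, the sequence converges to a
global minimizer `x*`, and with `s = (c/(1 − q^{(θ−1)/θ}))^{θ/(θ−1)}`, once
`k ≥ ((θ/(θ−1)) log(1/ε) + log(s(f(x⁰) − f*)/ρ))/log(1/q) + 1`, one has
`‖x^k − x*‖ ≤ ε`. -/
theorem deal_complexity_iterates {n : ℕ} (f : EuclideanSpace ℝ (Fin n) → ℝ)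
    (hf : ContDiff ℝ 1 f) (hbdd : BddBelow (Set.range f))
    (fStar : ℝ) (hfStar : fStar = ⨅ y, f y)
    (ρ θ : ℝ) (hρ : 0 < ρ) (hθ : 1 < θ)
    (ϑ τ : ℝ) (hϑ : ϑ ∈ Set.Ioo (0 : ℝ) 1) (hτ : 0 < τ) (hθϑ : θ = 1 / ϑ)
    (hKL : ∀ y : EuclideanSpace ℝ (Fin n), (f y - fStar) ^ ϑ ≤ τ * ‖gradient f y‖)
    (x : ℕ → EuclideanSpace ℝ (Fin n))
    (hdesc : ∀ k : ℕ, f (x (k + 1)) ≤ f (x k) - ρ * ‖gradient f (x k)‖ ^ θ)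
    (c : ℝ) (hc : 0 < c)
    (hstep : ∀ k : ℕ, ‖x (k + 1) - x k‖ ≤ c * ‖gradient f (x k)‖ ^ (θ - 1))
    (h0 : fStar < f (x 0))
    (hq0 : 0 < 1 - ρ / τ ^ θ) (hq1 : 1 - ρ / τ ^ θ < 1) :
    ∃ xstar : EuclideanSpace ℝ (Fin n),
      Tendsto x atTop (𝓝 xstar) ∧ (∀ y, f xstar ≤ f y) ∧
      ∀ ε : ℝ, 0 < ε → ∀ k : ℕ,
        (θ / (θ - 1) * Real.log (1 / ε) +
            Real.log ((c / (1 - (1 - ρ / τ ^ θ) ^ ((θ - 1) / θ))) ^ (θ / (θ - 1)) *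
              (f (x 0) - fStar) / ρ)) /
            Real.log (1 / (1 - ρ / τ ^ θ)) + 1 ≤ (k : ℝ) →
          ‖x k - xstar‖ ≤ ε := by
  set q : ℝ := 1 - ρ / τ ^ θ with hq
  have hθ0 : 0 < θ := by linarith
  have hθ1 : 0 < θ - 1 := by linarith
  set a : ℝ := (θ - 1) / θ with ha
  have ha0 : 0 < a := div_pos hθ1 hθ0
  have hainv : θ / (θ - 1) = a⁻¹ := by rw [ha, inv_div]
  have hϑθ : ϑ * θ = 1 := by
    rw [hθϑ]; field_simp [hϑ.1.ne']
  have hEnn : ∀ y, 0 ≤ f y - fStar := fun y => by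
    have := ciInf_le hbdd y
    rw [hfStar]; linarith
  have hτθ : 0 < τ ^ θ := Real.rpow_pos_of_pos hτ θ
  have hKL' : ∀ y, f y - fStar ≤ τ ^ θ * ‖gradient f y‖ ^ θ := fun y => by
    have h := Real.rpow_le_rpow (Real.rpow_nonneg (hEnn y) ϑ) (hKL y) hθ0.le
    rwa [← Real.rpow_mul (hEnn y), hϑθ, Real.rpow_one,
      Real.mul_rpow hτ.le (norm_nonneg _)] at h
  have hcontr : ∀ k, f (x (k + 1)) - fStar ≤ q * (f (x k) - fStar) := fun k => by
    have h1 := hdesc k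
    have h2 : ρ / τ ^ θ * (f (x k) - fStar) ≤ ρ * ‖gradient f (x k)‖ ^ θ := by
      calc ρ / τ ^ θ * (f (x k) - fStar)
          ≤ ρ / τ ^ θ * (τ ^ θ * ‖gradient f (x k)‖ ^ θ) :=
            mul_le_mul_of_nonneg_left (hKL' _) (by positivity)
        _ = ρ * ‖gradient f (x k)‖ ^ θ := by field_simp
    rw [hq, sub_mul]; linarith
  have hE : ∀ k, f (x k) - fStar ≤ q ^ k * (f (x 0) - fStar) := by
    intro k
    induction k with
    | zero => simp
    | succ k ih =>
      calc f (x (k + 1)) - fStar ≤ q * (f (x k) - fStar) := hcontr k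
        _ ≤ q * (q ^ k * (f (x 0) - fStar)) := mul_le_mul_of_nonneg_left ih hq0.le
        _ = q ^ (k + 1) * (f (x 0) - fStar) := by ring
  have hE0 : 0 < f (x 0) - fStar := by linarith
  set E0 : ℝ := f (x 0) - fStar with hE0def
  have hD : 0 < E0 / ρ := div_pos hE0 hρ
  have hgrad : ∀ k, ‖gradient f (x k)‖ ^ θ ≤ E0 / ρ * q ^ k := fun k => by
    have h1 := hdesc k
    have h2 := hEnn (x (k + 1))
    have h3 := hE k
    rw [div_mul_eq_mul_div, le_div_iff₀ hρ]
    linarith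
  set r : ℝ := q ^ a with hr
  have hr0 : 0 < r := Real.rpow_pos_of_pos hq0 a
  have hr1 : r < 1 := Real.rpow_lt_one hq0.le hq1 ha0
  have hrk : ∀ k : ℕ, (E0 / ρ * q ^ k) ^ a = (E0 / ρ) ^ a * r ^ k := fun k => by
    rw [Real.mul_rpow hD.le (by positivity), hr, ← Real.rpow_natCast q k,
      ← Real.rpow_natCast (q ^ a) k, ← Real.rpow_mul hq0.le, ← Real.rpow_mul hq0.le, mul_comm a]
  have hgeom : ∀ k, dist (x k) (x (k + 1)) ≤ c * (E0 / ρ) ^ a * r ^ k := fun k => by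
    rw [dist_comm, dist_eq_norm]
    refine (hstep k).trans ?_
    rw [mul_assoc]
    refine mul_le_mul_of_nonneg_left ?_ hc.le
    rw [← hrk]
    have h := Real.rpow_le_rpow (by positivity) (hgrad k) ha0.le
    rwa [← Real.rpow_mul (norm_nonneg _), ha, mul_div_cancel₀ _ hθ0.ne', ← ha] at h
  obtain ⟨xstar, hlim⟩ := cauchySeq_tendsto_of_complete (cauchySeq_of_le_geometric r _ hr1 hgeom)
  refine ⟨xstar, hlim, ?_, ?_⟩
  · have h1 : Tendsto (fun k => f (x k)) atTop (𝓝 (f xstar)) :=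
      (hf.continuous.tendsto xstar).comp hlim
    have h2 : Tendsto (fun k : ℕ => q ^ k * E0 + fStar) atTop (𝓝 (0 * E0 + fStar)) :=
      ((tendsto_pow_atTop_nhds_zero_of_lt_one hq0.le hq1).mul_const E0).add_const fStar
    have h3 : f xstar ≤ 0 * E0 + fStar :=
      le_of_tendsto_of_tendsto' h1 h2 fun k => by linarith [hE k]
    intro y
    linarith [hEnn y]
  · intro ε hε k hk
    have hdist := dist_le_of_le_geometric_of_tendsto r _ hr1 hgeom hlim k
    rw [dist_eq_norm] at hdist
    refine hdist.trans ?_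
    have hr' : 0 < 1 - r := by linarith
    have hb : 0 < c / (1 - r) := div_pos hc hr'
    have hlq : 0 < -Real.log q := neg_pos.mpr (Real.log_neg hq0 hq1)
    -- Unfold the logarithms so that `hk` is affine in `log ε`, `log (c / (1 - r))`,
    -- `log (E0 / ρ)` and `log q`.
    rw [hainv, one_div, one_div, Real.log_inv, Real.log_inv, mul_div_assoc,
      Real.log_mul (Real.rpow_pos_of_pos hb _).ne' hD.ne', Real.log_rpow hb] at hk
    have hk' := (div_le_iff₀ hlq).mp ((le_add_of_nonneg_right zero_le_one).trans hk)
    have hk2 := mul_le_mul_of_nonneg_left hk' ha0.le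
    have haa : a * a⁻¹ = 1 := mul_inv_cancel₀ ha0.ne'
    have heq : c * (E0 / ρ) ^ a * r ^ k / (1 - r) = c / (1 - r) * ((E0 / ρ) ^ a * r ^ k) := by
      ring
    have hDa : 0 < (E0 / ρ) ^ a := Real.rpow_pos_of_pos hD a
    rw [heq, ← Real.log_le_log_iff (by positivity) hε, Real.log_mul hb.ne' (by positivity),
      Real.log_mul hDa.ne' (by positivity), Real.log_rpow hD, Real.log_pow, hr,
      Real.log_rpow hq0, ← hr]
    have hexp : a * (a⁻¹ * -Real.log ε + (a⁻¹ * Real.log (c / (1 - r)) + Real.log (E0 / ρ)))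
        = -Real.log ε + Real.log (c / (1 - r)) + a * Real.log (E0 / ρ) := by
      linear_combination (Real.log (c / (1 - r)) - Real.log ε) * haa
    rw [hexp] at hk2
    linarith
end

section
/- Let f : ℝⁿ → ℝ be continuously differentiable, let ρ > 0, θ > 1, ϑ ∈ (0,1), τ > 0, and let x, x⁺, x̄ ∈ ℝⁿ satisfy: the descent inequality f(x⁺) ≤ f(x) − ρ‖∇f(x)‖^θ, the KL-type inequality (f(x) − f(x̄))^ϑ ≤ τ‖∇f(x)‖, and the ordering f(x̄) < f(x⁺) ≤ f(x). Then (f(x) − f(x̄))^{ϑ − 1/θ} ≤ τ ρ^{−1/θ}. -/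
open Filter Topology

/-! Since `f xbar < f xp`, the descent inequality gives `ρ ‖∇f(x)‖ ^ θ ≤ D` with
`D = f x - f xbar > 0`, hence `‖∇f(x)‖ ≤ (D / ρ) ^ (1 / θ)`. Inserting this into the
KL inequality `D ^ ϑ ≤ τ ‖∇f(x)‖` and dividing by `D ^ (1 / θ)` gives the claim. -/

/-- One-step compatibility estimate between the descent exponent `θ`
and the KL exponent `ϑ`: if `f(x⁺) ≤ f(x) − ρ‖∇f(x)‖^θ`, `(f(x) − f(x̄))^ϑ ≤ τ‖∇f(x)‖`,
and `f(x̄) < f(x⁺) ≤ f(x)`, then `(f(x) − f(x̄))^{ϑ − 1/θ} ≤ τ ρ^{−1/θ}`. -/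
theorem deal_one_step_compatibility {n : ℕ} (f : EuclideanSpace ℝ (Fin n) → ℝ)
    (hf : ContDiff ℝ 1 f)
    (ρ θ ϑ τ : ℝ) (hρ : 0 < ρ) (hθ : 1 < θ) (hϑ : ϑ ∈ Set.Ioo (0 : ℝ) 1) (hτ : 0 < τ)
    (x xp xbar : EuclideanSpace ℝ (Fin n))
    (hdesc : f xp ≤ f x - ρ * ‖gradient f x‖ ^ θ)
    (hKL : (f x - f xbar) ^ ϑ ≤ τ * ‖gradient f x‖)
    (h1 : f xbar < f xp) (h2 : f xp ≤ f x) :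
    (f x - f xbar) ^ (ϑ - 1 / θ) ≤ τ * ρ ^ (-(1 / θ)) := by
  have hD : 0 < f x - f xbar := by linarith
  have hg : 0 ≤ ‖gradient f x‖ := norm_nonneg _
  generalize ‖gradient f x‖ = g at *
  have hpow : g ^ θ ≤ (f x - f xbar) / ρ := by
    rw [le_div_iff₀ hρ]
    linarith
  -- Taking `θ`-th roots: the descent step bounds the gradient by the gap `f x - f xbar`.
  have hroot : g ≤ (f x - f xbar) ^ (1 / θ) * ρ ^ (-(1 / θ)) := by
    have hθ0 : θ ≠ 0 := by linarith
    calc g = (g ^ θ) ^ (1 / θ) := by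
          rw [← Real.rpow_mul hg, mul_one_div_cancel hθ0, Real.rpow_one]
      _ ≤ ((f x - f xbar) / ρ) ^ (1 / θ) :=
          Real.rpow_le_rpow (Real.rpow_nonneg hg _) hpow (by positivity)
      _ = (f x - f xbar) ^ (1 / θ) * ρ ^ (-(1 / θ)) := by
          rw [Real.div_rpow hD.le hρ.le, Real.rpow_neg hρ.le, div_eq_mul_inv]
  rw [Real.rpow_sub hD, div_le_iff₀ (Real.rpow_pos_of_pos hD _)]
  calc (f x - f xbar) ^ ϑ ≤ τ * g := hKL
    _ ≤ τ * ((f x - f xbar) ^ (1 / θ) * ρ ^ (-(1 / θ))) :=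
        mul_le_mul_of_nonneg_left hroot hτ.le
    _ = τ * ρ ^ (-(1 / θ)) * (f x - f xbar) ^ (1 / θ) := by ring
end

section
/- Let f : ℝⁿ → ℝ be continuously differentiable with ν-Hölder continuous gradient of constant L > 0, where ν ∈ (0,1]. Let β = (1−ν)/ν, let c₁, c₂ > 0, and let x, d ∈ ℝⁿ satisfy the generalized sufficient descent conditions ⟨∇f(x), d⟩ ≤ −c₁‖∇f(x)‖^{2+β} and ‖d‖ ≤ c₂‖∇f(x)‖^{1+β}. Then, with the constant step-size α := (c₁/(c₂^{1+ν}L))^{1/ν}, it holds that f(x + αd) ≤ f(x) − (c₁αν/(1+ν))‖∇f(x)‖^{1 + 1/ν}. -/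
/-!
Along the segment from `x` to `x + s`, the function
`t ↦ f (x + t s) - t ⟪∇f x, s⟫ - L/(1+ν) ‖s‖^(1+ν) t^(1+ν)` has nonpositive derivative, by
Cauchy–Schwarz and the Hölder bound; comparing `t = 0` with `t = 1` gives the Hölderian descent
inequality (`holder_descent`). It is applied with `s = α d`. Since `β = (1-ν)/ν`, both
`‖∇f x‖^(2+β)` and `(‖∇f x‖^(1+β))^(1+ν)` equal `‖∇f x‖^(1+1/ν)`, and the choice of `α` means
`α^ν c₂^(1+ν) L = c₁`, so the remainder is at most `c₁ α/(1+ν) ‖∇f x‖^(1+1/ν)`, which leaves the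
fraction `1 - 1/(1+ν) = ν/(1+ν)` of the first-order decrease.
-/

open Filter Topology
open scoped RealInnerProductSpace

/-- The upper half of the Hölderian descent inequality. -/
lemma holder_descent {n : ℕ} (f : EuclideanSpace ℝ (Fin n) → ℝ)
    (hf : ContDiff ℝ 1 f) (ν L : ℝ) (hν : 0 < ν)
    (hHolder : ∀ x y : EuclideanSpace ℝ (Fin n),
      ‖gradient f x - gradient f y‖ ≤ L * ‖x - y‖ ^ ν)
    (x s : EuclideanSpace ℝ (Fin n)) :
    f (x + s) ≤ f x + ⟪gradient f x, s⟫ + L / (1 + ν) * ‖s‖ ^ (1 + ν) := by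
  have hν1 : (1 + ν) ≠ 0 := by positivity
  let φ : ℝ → ℝ := fun t =>
    f (x + t • s) - t * ⟪gradient f x, s⟫ - L / (1 + ν) * ‖s‖ ^ (1 + ν) * t ^ (1 + ν)
  have hder : ∀ t : ℝ, HasDerivAt φ (⟪gradient f (x + t • s), s⟫ - 1 * ⟪gradient f x, s⟫
      - L / (1 + ν) * ‖s‖ ^ (1 + ν) * ((1 + ν) * t ^ (1 + ν - 1))) t := by
    intro t
    have hdf : DifferentiableAt ℝ f (x + t • s) := (hf.differentiable one_ne_zero) _
    have h1 : HasDerivAt (fun t : ℝ => x + t • s) s t := by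
      simpa using ((hasDerivAt_id t).smul_const s).const_add x
    have h2 : HasDerivAt (fun t : ℝ => f (x + t • s)) ⟪gradient f (x + t • s), s⟫ t := by
      have h := hdf.hasFDerivAt.comp_hasDerivAt t h1
      rw [inner_gradient_left]
      exact h
    exact (h2.sub ((hasDerivAt_id t).mul_const _)).sub
      ((Real.hasDerivAt_rpow_const (Or.inr (by linarith))).const_mul _)
  have hanti : AntitoneOn φ (Set.Icc 0 1) := by
    refine antitoneOn_of_deriv_nonpos (convex_Icc 0 1)
      (fun t _ => (hder t).continuousAt.continuousWithinAt)
      (fun t _ => (hder t).differentiableAt.differentiableWithinAt) ?_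
    intro t ht
    rw [interior_Icc] at ht
    rw [(hder t).deriv]
    have hcs := real_inner_le_norm (gradient f (x + t • s) - gradient f x) s
    rw [inner_sub_left] at hcs
    have hH := hHolder (x + t • s) x
    rw [add_sub_cancel_left, norm_smul, Real.norm_of_nonneg ht.1.le,
      Real.mul_rpow ht.1.le (norm_nonneg s)] at hH
    have hm := mul_le_mul_of_nonneg_right hH (norm_nonneg s)
    have e : L / (1 + ν) * ‖s‖ ^ (1 + ν) * ((1 + ν) * t ^ (1 + ν - 1))
        = L * (t ^ ν * ‖s‖ ^ ν) * ‖s‖ := by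
      rw [add_sub_cancel_left, Real.rpow_one_add' (norm_nonneg s) hν1]
      field_simp
    rw [e]
    linarith
  have h01 := hanti (Set.left_mem_Icc.2 zero_le_one) (Set.right_mem_Icc.2 zero_le_one) zero_le_one
  simp only [φ, one_smul, zero_smul, add_zero, Real.one_rpow, Real.zero_rpow hν1] at h01
  linarith

/-- Constant step-size descent (DEAL-C): for `f` with `ν`-Hölder
continuous gradient, a generalized sufficient descent direction `d` with
`β = (1−ν)/ν`, and step-size `α = (c₁/(c₂^{1+ν}L))^{1/ν}`, one obtains the
generalized descent inequality with exponent `1 + 1/ν`. -/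
theorem dealC_descent_inequality {n : ℕ} (f : EuclideanSpace ℝ (Fin n) → ℝ)
    (hf : ContDiff ℝ 1 f)
    (ν L : ℝ) (hν : ν ∈ Set.Ioc (0 : ℝ) 1) (hL : 0 < L)
    (hHolder : ∀ x y : EuclideanSpace ℝ (Fin n),
      ‖gradient f x - gradient f y‖ ≤ L * ‖x - y‖ ^ ν)
    (β c₁ c₂ : ℝ) (hβ : β = (1 - ν) / ν) (hc₁ : 0 < c₁) (hc₂ : 0 < c₂)
    (x d : EuclideanSpace ℝ (Fin n))
    (hdir₁ : ⟪gradient f x, d⟫ ≤ -c₁ * ‖gradient f x‖ ^ (2 + β))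
    (hdir₂ : ‖d‖ ≤ c₂ * ‖gradient f x‖ ^ (1 + β)) :
    f (x + (c₁ / (c₂ ^ (1 + ν) * L)) ^ (1 / ν) • d) ≤
      f x - c₁ * (c₁ / (c₂ ^ (1 + ν) * L)) ^ (1 / ν) * ν / (1 + ν) *
        ‖gradient f x‖ ^ (1 + 1 / ν) := by
  obtain ⟨hν0, -⟩ := hν
  set G := ‖gradient f x‖
  have hG : 0 ≤ G := norm_nonneg _
  have hC : 0 < c₂ ^ (1 + ν) := Real.rpow_pos_of_pos hc₂ _
  have hq : 0 < c₁ / (c₂ ^ (1 + ν) * L) := by positivity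
  have hαν : ((c₁ / (c₂ ^ (1 + ν) * L)) ^ (1 / ν)) ^ ν = c₁ / (c₂ ^ (1 + ν) * L) := by
    rw [one_div, Real.rpow_inv_rpow hq.le hν0.ne']
  have hα : 0 < (c₁ / (c₂ ^ (1 + ν) * L)) ^ (1 / ν) := Real.rpow_pos_of_pos hq _
  set α := (c₁ / (c₂ ^ (1 + ν) * L)) ^ (1 / ν)
  have e1 : 2 + β = 1 + 1 / ν := by rw [hβ]; field_simp; ring
  have e2 : (1 + β) * (1 + ν) = 1 + 1 / ν := by rw [hβ]; field_simp; ring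
  have hν1 : 0 < 1 + ν := by positivity
  have hmain := holder_descent f hf ν L hν0 hHolder x (α • d)
  rw [inner_smul_right, norm_smul, Real.norm_of_nonneg hα.le,
    Real.mul_rpow hα.le (norm_nonneg d), Real.rpow_one_add' hα.le hν1.ne', hαν] at hmain
  rw [e1] at hdir₁
  have hd : ‖d‖ ^ (1 + ν) ≤ c₂ ^ (1 + ν) * G ^ (1 + 1 / ν) := by
    have h := Real.rpow_le_rpow (norm_nonneg d) hdir₂ hν1.le
    rwa [Real.mul_rpow hc₂.le (Real.rpow_nonneg hG _), ← Real.rpow_mul hG, e2] at h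
  have hinner := mul_le_mul_of_nonneg_left hdir₁ hα.le
  have hrem : L / (1 + ν) * (α * (c₁ / (c₂ ^ (1 + ν) * L)) * ‖d‖ ^ (1 + ν))
      ≤ c₁ * α / (1 + ν) * G ^ (1 + 1 / ν) := by
    calc _ ≤ L / (1 + ν) * (α * (c₁ / (c₂ ^ (1 + ν) * L)) *
          (c₂ ^ (1 + ν) * G ^ (1 + 1 / ν))) := by gcongr
      _ = _ := by field_simp
  have hsplit : c₁ * α * ν / (1 + ν) * G ^ (1 + 1 / ν)
      = α * c₁ * G ^ (1 + 1 / ν) - c₁ * α / (1 + ν) * G ^ (1 + 1 / ν) := by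
    field_simp
    ring
  rw [hsplit]
  linarith
end

section
/- Let φ : ℝⁿ → ℝ be bounded below, let p > 1, γ > 0, and define the p-th order Moreau envelope e(x) := inf_{y∈ℝⁿ} { φ(y) + (1/(pγ))‖x − y‖^p }. Fix x ∈ ℝⁿ and suppose u ∈ ℝⁿ is a minimizer of y ↦ φ(y) + (1/(pγ))‖x − y‖^p (a high-order proximal point of x), and let g := (1/γ)‖x − u‖^{p−2}(x − u) (the gradient of e at x). Then e(u) ≤ e(x) − (γ^{1/(p−1)}/p)‖g‖^{p/(p−1)}. -/
/-!
The envelope at `u` is at most `φ u` (test the infimum at `y = u`), while the envelope at `x` is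
attained at `u`, so `e x = φ u + ‖x - u‖ ^ p / (p γ)`. The gap is therefore at least
`‖x - u‖ ^ p / (p γ)`, and since `‖g‖ = ‖x - u‖ ^ (p - 1) / γ`, this is exactly
`γ ^ (1 / (p - 1)) / p * ‖g‖ ^ (p / (p - 1))` (`prox_grad_term_eq`).
-/

/-- The decrease written through the gradient norm equals the proximal penalty; the case
`r = 0` is included because `0 ^ (p - 2) * 0 = 0`. -/
theorem prox_grad_term_eq {p γ r : ℝ} (hp : 1 < p) (hγ : 0 < γ) (hr : 0 ≤ r) :
    γ ^ (1 / (p - 1)) / p * (1 / γ * r ^ (p - 2) * r) ^ (p / (p - 1)) =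
      1 / (p * γ) * r ^ p := by
  have hp1 : p - 1 ≠ 0 := by linarith
  have hp0 : p ≠ 0 := by linarith
  have hpow : r ^ (p - 2) * r = r ^ (p - 1) := by
    rcases hr.eq_or_lt with rfl | hr
    · rw [mul_zero, Real.zero_rpow hp1]
    · rw [← Real.rpow_add_one hr.ne']
      congr 1
      ring
  have hexp : p / (p - 1) = 1 / (p - 1) + 1 := by
    field_simp
    ring
  have hγpow : (1 / γ) ^ (p / (p - 1)) = (γ ^ (1 / (p - 1)) * γ)⁻¹ := by
    rw [one_div γ, Real.inv_rpow hγ.le, hexp, Real.rpow_add_one hγ.ne']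
  have hγ1 : γ ^ (1 / (p - 1)) ≠ 0 := (Real.rpow_pos_of_pos hγ _).ne'
  rw [mul_assoc (1 / γ), hpow, Real.mul_rpow (by positivity) (by positivity), hγpow,
    ← Real.rpow_mul hr, mul_div_cancel₀ p hp1]
  field_simp

open Filter Topology

/-- Per-iteration descent inequality of the high-order proximal-point
algorithm: if `u` is a `p`-th order proximal point of `x` for `φ` with parameter `γ`,
`e` is the `p`-th order Moreau envelope, and `g = (1/γ)‖x − u‖^{p−2}(x − u)` (the
gradient of `e` at `x`), then `e(u) ≤ e(x) − (γ^{1/(p−1)}/p)‖g‖^{p/(p−1)}`. -/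
theorem hippa_descent_inequality {n : ℕ} (φ : EuclideanSpace ℝ (Fin n) → ℝ)
    (hφbdd : BddBelow (Set.range φ))
    (p γ : ℝ) (hp : 1 < p) (hγ : 0 < γ)
    (e : EuclideanSpace ℝ (Fin n) → ℝ)
    (he : ∀ z : EuclideanSpace ℝ (Fin n),
      e z = ⨅ y : EuclideanSpace ℝ (Fin n), (φ y + 1 / (p * γ) * ‖z - y‖ ^ p))
    (x u : EuclideanSpace ℝ (Fin n))
    (hu : ∀ y : EuclideanSpace ℝ (Fin n),
      φ u + 1 / (p * γ) * ‖x - u‖ ^ p ≤ φ y + 1 / (p * γ) * ‖x - y‖ ^ p) :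
    e u ≤ e x - γ ^ (1 / (p - 1)) / p *
      ‖(1 / γ * ‖x - u‖ ^ (p - 2)) • (x - u)‖ ^ (p / (p - 1)) := by
  have hp0 : 0 < p := by linarith
  have hnorm : ‖(1 / γ * ‖x - u‖ ^ (p - 2)) • (x - u)‖ = 1 / γ * ‖x - u‖ ^ (p - 2) * ‖x - u‖ := by
    rw [norm_smul, Real.norm_of_nonneg (by positivity)]
  rw [hnorm, prox_grad_term_eq hp hγ (norm_nonneg _)]
  have hx : φ u + 1 / (p * γ) * ‖x - u‖ ^ p ≤ e x := by
    rw [he]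
    exact le_ciInf hu
  have hu' : e u ≤ φ u := by
    obtain ⟨m, hm⟩ := hφbdd
    -- Without this bound the real infimum would take the junk value `0`.
    have hbdd : BddBelow (Set.range fun y => φ y + 1 / (p * γ) * ‖u - y‖ ^ p) := by
      refine ⟨m, ?_⟩
      rintro _ ⟨y, rfl⟩
      have h1 : m ≤ φ y := hm ⟨y, rfl⟩
      have h2 : 0 ≤ 1 / (p * γ) * ‖u - y‖ ^ p := by positivity
      exact h1.trans (le_add_of_nonneg_right h2)
    rw [he]
    refine (ciInf_le hbdd u).trans_eq ?_
    simp [Real.zero_rpow hp0.ne']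
  linarith
end

section
/- Let f : ℝⁿ → ℝ be differentiable with L-Lipschitz continuous gradient, and let g : ℝⁿ → ℝ be bounded below. Fix γ with 0 < γ < 1/L and define the forward-backward envelope φ_γ(x) := inf_{y∈ℝⁿ} { f(x) + ⟨∇f(x), y − x⟩ + (1/(2γ))‖y − x‖² + g(y) }. Fix x ∈ ℝⁿ, let u be a minimizer of y ↦ f(x) + ⟨∇f(x), y − x⟩ + (1/(2γ))‖y − x‖² + g(y) (the forward-backward point T_γ(x)), let H : ℝⁿ → ℝⁿ be a linear map with operator norm ‖H‖ ≤ L (the Hessian of f at x), and suppose the gradient of φ_γ at x is G := (1/γ)((x − u) − γH(x − u)). Then: (i) ‖G‖ ≤ ((1 + γL)/γ)‖x − u‖, and (ii) φ_γ(u) ≤ φ(u) ≤ φ_γ(x) − ((1 − γL)/(2γ))‖x − u‖², where φ := f + g; consequently φ_γ(u) ≤ φ_γ(x) − (γ(1 − γL)/(2(1 + γL)²))‖G‖². -/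
/-!
The second inequality is the value `y = u` in the infimum defining `φγ u`; the infimum is a genuine
one because completing the square bounds the model below (`bddBelow_model`). The third is the
descent lemma (`descent_lemma`) at the pair `x, u`: since `u` attains the infimum defining `φγ x`,
replacing the weight `1 / (2γ)` by `L / 2` lowers that value by exactly
`((1 - γL) / (2γ)) ‖x - u‖²`. The bound on `‖G‖` is the triangle inequality together with
`‖H‖ ≤ L`, and squaring it turns the third inequality into the fourth.
-/


open Filter Topology
open scoped RealInnerProductSpace

/-- Descent lemma: a function with `L`-Lipschitz gradient lies below its quadratic model of
curvature `L`. Along the segment from `x` to `y`, the function minus the model has nonpositive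
derivative. -/
lemma descent_lemma {E : Type*} [NormedAddCommGroup E] [InnerProductSpace ℝ E] [CompleteSpace E]
    {f : E → ℝ} (hf : Differentiable ℝ f) {L : ℝ}
    (hLip : ∀ x y : E, ‖gradient f x - gradient f y‖ ≤ L * ‖x - y‖) (x y : E) :
    f y ≤ f x + ⟪gradient f x, y - x⟫ + L / 2 * ‖y - x‖ ^ 2 := by
  set d := y - x with hd
  have hder : ∀ t : ℝ, HasDerivAt
      (fun t : ℝ => f (x + t • d) - t * ⟪gradient f x, d⟫ - L / 2 * ‖d‖ ^ 2 * t ^ 2)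
      (⟪gradient f (x + t • d), d⟫ - ⟪gradient f x, d⟫ - L * ‖d‖ ^ 2 * t) t := by
    intro t
    have h1 : HasDerivAt (fun t : ℝ => x + t • d) d t := by
      simpa using ((hasDerivAt_id t).smul_const d).const_add x
    have h2 : HasDerivAt (fun t : ℝ => f (x + t • d)) ⟪gradient f (x + t • d), d⟫ t := by
      have h := (hf (x + t • d)).hasGradientAt.hasFDerivAt.comp_hasDerivAt t h1
      simpa [Function.comp_def] using h
    have h3 := (hasDerivAt_id t).mul_const ⟪gradient f x, d⟫
    have h4 := ((hasDerivAt_id t).pow 2).const_mul (L / 2 * ‖d‖ ^ 2)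
    refine ((h2.sub h3).sub h4).congr_deriv ?_
    simp only [id, Nat.cast_ofNat, one_mul, mul_one, Nat.add_one_sub_one, pow_one]
    ring
  have hanti := antitoneOn_of_deriv_nonpos (convex_Icc (0 : ℝ) 1)
    (fun t _ => (hder t).continuousAt.continuousWithinAt)
    (fun t _ => (hder t).differentiableAt.differentiableWithinAt)
    (fun t ht => by
      rw [interior_Icc] at ht
      rw [(hder t).deriv, ← inner_sub_left]
      have h1 := real_inner_le_norm (gradient f (x + t • d) - gradient f x) d
      have h2 := hLip (x + t • d) x
      rw [add_sub_cancel_left, norm_smul, Real.norm_of_nonneg ht.1.le] at h2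
      have h3 := mul_le_mul_of_nonneg_right h2 (norm_nonneg d)
      nlinarith)
  have h01 := hanti (Set.left_mem_Icc.2 zero_le_one) (Set.right_mem_Icc.2 zero_le_one) zero_le_one
  have hxy : x + d = y := by simp [hd]
  simp only [one_smul, zero_smul, add_zero, hxy] at h01
  linarith

/-- Completing the square gives the lower bound `c - (γ / 2) ‖v‖² + inf g`. -/
lemma bddBelow_model {E : Type*} [NormedAddCommGroup E] [InnerProductSpace ℝ E]
    {g : E → ℝ} (hg : BddBelow (Set.range g)) {γ : ℝ} (hγ : 0 < γ) (c : ℝ) (v z : E) :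
    BddBelow (Set.range fun y => c + ⟪v, y - z⟫ + 1 / (2 * γ) * ‖y - z‖ ^ 2 + g y) := by
  obtain ⟨m, hm⟩ := hg
  refine ⟨c - γ / 2 * ‖v‖ ^ 2 + m, ?_⟩
  rintro _ ⟨y, rfl⟩
  have h1 : m ≤ g y := hm ⟨y, rfl⟩
  have h2 : -(‖v‖ * ‖y - z‖) ≤ ⟪v, y - z⟫ := (abs_le.1 (abs_real_inner_le_norm v (y - z))).1
  have h3 : 0 ≤ 1 / (2 * γ) * (‖y - z‖ - γ * ‖v‖) ^ 2 := by positivity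
  have h4 : 1 / (2 * γ) * (‖y - z‖ - γ * ‖v‖) ^ 2
      = 1 / (2 * γ) * ‖y - z‖ ^ 2 - ‖v‖ * ‖y - z‖ + γ / 2 * ‖v‖ ^ 2 := by
    field_simp
    ring
  dsimp only
  linarith

/-- Descent inequality of the (boosted) proximal gradient algorithm
via the forward-backward envelope: with `u = T_γ(x)`, a Hessian bound `‖H‖ ≤ L`, and
`G = (1/γ)((x − u) − γH(x − u))` the gradient of the forward-backward envelope `φγ`
at `x`, one has `‖G‖ ≤ ((1+γL)/γ)‖x − u‖`,
`φγ(u) ≤ φ(u) ≤ φγ(x) − ((1−γL)/(2γ))‖x − u‖²`, and consequently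
`φγ(u) ≤ φγ(x) − (γ(1−γL)/(2(1+γL)²))‖G‖²`. -/
theorem fbe_descent_inequality {n : ℕ}
    (f g : EuclideanSpace ℝ (Fin n) → ℝ)
    (hf : Differentiable ℝ f) (L : ℝ) (hL : 0 < L)
    (hLip : ∀ x y : EuclideanSpace ℝ (Fin n),
      ‖gradient f x - gradient f y‖ ≤ L * ‖x - y‖)
    (hgbdd : BddBelow (Set.range g))
    (γ : ℝ) (hγ0 : 0 < γ) (hγL : γ < 1 / L)
    (φγ : EuclideanSpace ℝ (Fin n) → ℝ)
    (hφγ : ∀ z : EuclideanSpace ℝ (Fin n),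
      φγ z = ⨅ y : EuclideanSpace ℝ (Fin n),
        (f z + ⟪gradient f z, y - z⟫ + 1 / (2 * γ) * ‖y - z‖ ^ 2 + g y))
    (x u : EuclideanSpace ℝ (Fin n))
    (hu : ∀ y : EuclideanSpace ℝ (Fin n),
      f x + ⟪gradient f x, u - x⟫ + 1 / (2 * γ) * ‖u - x‖ ^ 2 + g u ≤
        f x + ⟪gradient f x, y - x⟫ + 1 / (2 * γ) * ‖y - x‖ ^ 2 + g y)
    (H : EuclideanSpace ℝ (Fin n) →L[ℝ] EuclideanSpace ℝ (Fin n)) (hH : ‖H‖ ≤ L)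
    (G : EuclideanSpace ℝ (Fin n))
    (hG : G = (1 / γ) • ((x - u) - γ • H (x - u))) :
    ‖G‖ ≤ (1 + γ * L) / γ * ‖x - u‖ ∧
    φγ u ≤ f u + g u ∧
    f u + g u ≤ φγ x - (1 - γ * L) / (2 * γ) * ‖x - u‖ ^ 2 ∧
    φγ u ≤ φγ x - γ * (1 - γ * L) / (2 * (1 + γ * L) ^ 2) * ‖G‖ ^ 2 := by
  have hγL1 : γ * L < 1 := (lt_div_iff₀ hL).1 hγL
  have hGn : ‖G‖ ≤ (1 + γ * L) / γ * ‖x - u‖ := by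
    have h1 : ‖H (x - u)‖ ≤ L * ‖x - u‖ := H.le_of_opNorm_le hH _
    have h2 : ‖(x - u) - γ • H (x - u)‖ ≤ (1 + γ * L) * ‖x - u‖ := by
      calc ‖(x - u) - γ • H (x - u)‖ ≤ ‖x - u‖ + ‖γ • H (x - u)‖ := norm_sub_le _ _
        _ = ‖x - u‖ + γ * ‖H (x - u)‖ := by rw [norm_smul, Real.norm_of_nonneg hγ0.le]
        _ ≤ ‖x - u‖ + γ * (L * ‖x - u‖) := by gcongr
        _ = (1 + γ * L) * ‖x - u‖ := by ring
    rw [hG, norm_smul, Real.norm_of_nonneg (by positivity)]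
    calc 1 / γ * ‖(x - u) - γ • H (x - u)‖ ≤ 1 / γ * ((1 + γ * L) * ‖x - u‖) := by gcongr
      _ = (1 + γ * L) / γ * ‖x - u‖ := by ring
  have hle : φγ u ≤ f u + g u := by
    rw [hφγ u]
    refine (ciInf_le (bddBelow_model hgbdd hγ0 (f u) (gradient f u) u) u).trans_eq ?_
    simp
  have hdesc : f u + g u ≤ φγ x - (1 - γ * L) / (2 * γ) * ‖x - u‖ ^ 2 := by
    have h1 := descent_lemma hf hLip x u
    have h2 : f x + ⟪gradient f x, u - x⟫ + 1 / (2 * γ) * ‖u - x‖ ^ 2 + g u ≤ φγ x := by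
      rw [hφγ x]
      exact le_ciInf hu
    have h3 : (1 - γ * L) / (2 * γ) * ‖u - x‖ ^ 2
        = 1 / (2 * γ) * ‖u - x‖ ^ 2 - L / 2 * ‖u - x‖ ^ 2 := by
      field_simp
    rw [norm_sub_rev x u]
    linarith
  refine ⟨hGn, hle, hdesc, ?_⟩
  have hc : 0 ≤ γ * (1 - γ * L) / (2 * (1 + γ * L) ^ 2) :=
    div_nonneg (mul_nonneg hγ0.le (by linarith)) (by positivity)
  have hsq : γ * (1 - γ * L) / (2 * (1 + γ * L) ^ 2) * ‖G‖ ^ 2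
      ≤ (1 - γ * L) / (2 * γ) * ‖x - u‖ ^ 2 := by
    calc _ ≤ γ * (1 - γ * L) / (2 * (1 + γ * L) ^ 2) * ((1 + γ * L) / γ * ‖x - u‖) ^ 2 := by
          gcongr
      _ = _ := by
          have : 1 + γ * L ≠ 0 := by positivity
          field_simp
  linarith
end

section
/- Let p ∈ (1,2], let A be a real m×n matrix, b ∈ ℝᵐ, and suppose σ_min > 0 satisfies σ_min‖v‖ ≤ ‖Aᵀv‖ for all v ∈ ℝᵐ. Define f : ℝⁿ → ℝ by f(x) = (1/p)‖Ax − b‖^p, and let f* := inf_{x∈ℝⁿ} f(x). Then f satisfies the global KL inequality with exponent ϑ = 1 − 1/p and constant τ = 1/(σ_min p^{1−1/p}); that is, for every x ∈ ℝⁿ, (f(x) − f*)^{1−1/p} ≤ (1/(σ_min p^{1−1/p}))‖∇f(x)‖, where ∇f(x) = ‖Ax − b‖^{p−2} Aᵀ(Ax − b) (interpreted as 0 when Ax = b). -/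
/-!
Since `f ≥ 0`, also `f* ≥ 0`, so `0 ≤ f x - f* ≤ f x`, and it suffices to bound `f x ^ (1 - 1/p)`.
With `r = ‖A x - b‖` this power equals `r ^ (p - 1) / p ^ (1 - 1/p)`, while the lower bound on the
adjoint gives `‖∇f(x)‖ ≥ r ^ (p - 2) * (σmin * r) = σmin * r ^ (p - 1)`.
(Surjectivity of `A` forces `f* = 0`, but only `f* ≥ 0` matters for the inequality.)
-/

open Filter Topology

/-- The generalized least-`p`-norm objective
`f(x) = (1/p)‖Ax − b‖^p` of a linear inverse problem (with `σ_min‖v‖ ≤ ‖Aᵀv‖`)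
satisfies the global KL inequality with exponent `ϑ = 1 − 1/p` and constant
`τ = 1/(σ_min p^{1−1/p})`, where `∇f(x) = ‖Ax − b‖^{p−2}Aᵀ(Ax − b)`. -/
theorem least_p_norm_global_KL {m n : ℕ} (p : ℝ) (hp : p ∈ Set.Ioc (1 : ℝ) 2)
    (A : EuclideanSpace ℝ (Fin n) →L[ℝ] EuclideanSpace ℝ (Fin m))
    (b : EuclideanSpace ℝ (Fin m))
    (σmin : ℝ) (hσ : 0 < σmin)
    (hA : ∀ v : EuclideanSpace ℝ (Fin m),
      σmin * ‖v‖ ≤ ‖ContinuousLinearMap.adjoint A v‖)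
    (f : EuclideanSpace ℝ (Fin n) → ℝ)
    (hfdef : ∀ x, f x = 1 / p * ‖A x - b‖ ^ p)
    (fStar : ℝ) (hfStar : fStar = ⨅ x, f x) :
    ∀ x : EuclideanSpace ℝ (Fin n),
      (f x - fStar) ^ (1 - 1 / p) ≤
        1 / (σmin * p ^ (1 - 1 / p)) *
          ‖(‖A x - b‖ ^ (p - 2)) • ContinuousLinearMap.adjoint A (A x - b)‖ := by
  intro x
  obtain ⟨hp1, -⟩ := hp
  have hp0 : 0 < p := by linarith
  have hθ : 0 ≤ 1 - 1 / p := by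
    rw [sub_nonneg, div_le_one hp0]
    exact hp1.le
  have hf0 : ∀ y, 0 ≤ f y := fun y => by
    rw [hfdef]
    positivity
  have hstar0 : 0 ≤ fStar := hfStar ▸ Real.iInf_nonneg hf0
  have hstar_le : fStar ≤ f x :=
    hfStar ▸ ciInf_le ⟨0, Set.forall_mem_range.2 hf0⟩ x
  have hr : 0 ≤ ‖A x - b‖ := norm_nonneg _
  -- At `r = 0` the junk value `0 ^ (p - 2)` is harmless because it is multiplied by `0`.
  have hsplit : ‖A x - b‖ ^ (p - 1) = ‖A x - b‖ ^ (p - 2) * ‖A x - b‖ := by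
    rcases hr.eq_or_lt with h | h
    · rw [← h, mul_zero, Real.zero_rpow (by linarith)]
    · rw [← Real.rpow_add_one h.ne']
      ring_nf
  have hpow : f x ^ (1 - 1 / p) = ‖A x - b‖ ^ (p - 1) / p ^ (1 - 1 / p) := by
    have hexp : p * (1 - 1 / p) = p - 1 := by field_simp
    rw [hfdef, one_div_mul_eq_div, Real.div_rpow (by positivity) hp0.le,
      ← Real.rpow_mul hr, hexp]
  have hc : 0 < p ^ (1 - 1 / p) := Real.rpow_pos_of_pos hp0 _
  calc (f x - fStar) ^ (1 - 1 / p)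
      ≤ f x ^ (1 - 1 / p) :=
        Real.rpow_le_rpow (by linarith) (by linarith) hθ
    _ = 1 / (σmin * p ^ (1 - 1 / p)) *
          (‖A x - b‖ ^ (p - 2) * (σmin * ‖A x - b‖)) := by
        rw [hpow, hsplit]
        field_simp
    _ ≤ 1 / (σmin * p ^ (1 - 1 / p)) *
          ‖(‖A x - b‖ ^ (p - 2)) • ContinuousLinearMap.adjoint A (A x - b)‖ := by
        rw [norm_smul, Real.norm_of_nonneg (Real.rpow_nonneg hr _)]
        gcongr
        exact hA _
end

section
/- Let p ∈ (1,2], let A be a real m×n matrix, and b ∈ ℝᵐ. Define f : ℝⁿ → ℝ by f(x) = (1/p)‖Ax − b‖^p. Then f is differentiable with ∇f(x) = ‖Ax − b‖^{p−2} Aᵀ(Ax − b) (interpreted as 0 when Ax = b), and ∇f is (p−1)-Hölder continuous with constant 2^{2−p}‖A‖^p, i.e., ‖∇f(x) − ∇f(y)‖ ≤ 2^{2−p}‖A‖^p ‖x − y‖^{p−1} for all x, y ∈ ℝⁿ, where ‖A‖ denotes the operator norm of A. -/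
open Filter Topology

/-!
Write `J u = ‖u‖ ^ (p - 2) • u`. The gradient formula is the chain rule applied to the derivative
of `‖·‖ ^ p`, which holds at the origin as well since `p > 1`. The Hölder bound follows from
`‖J u - J v‖ ≤ 2 ^ (2 - p) * ‖u - v‖ ^ (p - 1)` (`norm_rpow_smul_sub_le`) composed with `A` and
its adjoint.

For that inequality put `q = p - 1`, `a = ‖u‖`, `c = ‖v‖` and fix `a, c > 0`. As a function of
`s = ‖u - v‖ ^ 2`, which ranges over `[(a - c) ^ 2, (a + c) ^ 2]`, the quantity `‖J u - J v‖ ^ 2`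
is affine, while `2 ^ (2 * (1 - q)) * s ^ q` is concave. It therefore suffices to compare the two
at the endpoints, where `u` and `v` are collinear; there the claim is the pair of scalar
inequalities `|a ^ q - c ^ q| ≤ |a - c| ^ q` and `a ^ q + c ^ q ≤ 2 ^ (1 - q) * (a + c) ^ q`.
-/

lemma abs_rpow_sub_rpow_le {a c q : ℝ} (ha : 0 ≤ a) (hc : 0 ≤ c) (hq0 : 0 ≤ q) (hq1 : q ≤ 1) :
    |a ^ q - c ^ q| ≤ |a - c| ^ q := by
  wlog h : c ≤ a generalizing a c
  · rw [abs_sub_comm, abs_sub_comm a c]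
    exact this hc ha (le_of_not_ge h)
  have h1 : c ^ q ≤ a ^ q := Real.rpow_le_rpow hc h hq0
  have h2 := Real.rpow_add_le_add_rpow (sub_nonneg.2 h) hc hq0 hq1
  rw [sub_add_cancel] at h2
  rw [abs_of_nonneg (sub_nonneg.2 h1), abs_of_nonneg (sub_nonneg.2 h)]
  linarith

lemma rpow_add_rpow_le {a c q : ℝ} (ha : 0 ≤ a) (hc : 0 ≤ c) (hq0 : 0 ≤ q) (hq1 : q ≤ 1) :
    a ^ q + c ^ q ≤ 2 ^ (1 - q) * (a + c) ^ q := by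
  have h := (Real.concaveOn_rpow hq0 hq1).2 (Set.mem_Ici.2 ha) (Set.mem_Ici.2 hc)
    (by norm_num : (0 : ℝ) ≤ 1 / 2) (by norm_num : (0 : ℝ) ≤ 1 / 2) (by norm_num)
  simp only [smul_eq_mul] at h
  rw [← mul_add, ← mul_add, Real.mul_rpow (by norm_num) (by positivity)] at h
  have h2 : (2 : ℝ) ^ (1 - q) = 2 * (1 / 2) ^ q := by
    rw [Real.rpow_sub two_pos, Real.rpow_one, Real.div_rpow zero_le_one zero_le_two,
      Real.one_rpow]
    ring
  rw [h2]
  linarith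

/-- The case of zero arguments is covered too: there `‖u‖ ^ (p - 2) • u = 0`, whatever the value
of the power `0 ^ (p - 2)`. -/
lemma norm_rpow_smul_sub_le {E : Type*} [NormedAddCommGroup E] [InnerProductSpace ℝ E]
    {p : ℝ} (hp1 : 1 < p) (hp2 : p ≤ 2) (u v : E) :
    ‖‖u‖ ^ (p - 2) • u - ‖v‖ ^ (p - 2) • v‖ ≤ 2 ^ (2 - p) * ‖u - v‖ ^ (p - 1) := by
  have hK : (1 : ℝ) ≤ 2 ^ (2 - p) := Real.one_le_rpow one_le_two (by linarith)
  have hzero : ∀ w : E, ‖‖w‖ ^ (p - 2) • w‖ ≤ 2 ^ (2 - p) * ‖w‖ ^ (p - 1) := by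
    intro w
    rcases eq_or_ne w 0 with rfl | hw
    · rw [smul_zero, norm_zero]
      positivity
    have hw' : 0 < ‖w‖ := norm_pos_iff.2 hw
    have h : ‖‖w‖ ^ (p - 2) • w‖ = ‖w‖ ^ (p - 1) := by
      rw [norm_smul, Real.norm_of_nonneg (by positivity), ← Real.rpow_add_one hw'.ne']
      ring_nf
    rw [h]
    exact le_mul_of_one_le_left (by positivity) hK
  rcases eq_or_ne u 0 with rfl | hu
  · simpa using hzero v
  rcases eq_or_ne v 0 with rfl | hv
  · simpa using hzero u
  have ha : 0 < ‖u‖ := norm_pos_iff.2 hu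
  have hc : 0 < ‖v‖ := norm_pos_iff.2 hv
  have hq0 : 0 ≤ p - 1 := by linarith
  have hq1 : p - 1 ≤ 1 := by linarith
  have hexp := norm_sub_sq_real (‖u‖ ^ (p - 2) • u) (‖v‖ ^ (p - 2) • v)
  have hs := norm_sub_sq_real u v
  have ht := abs_le.1 (abs_real_inner_le_norm u v)
  rw [real_inner_smul_left, real_inner_smul_right, norm_smul, norm_smul,
    Real.norm_of_nonneg (by positivity), Real.norm_of_nonneg (by positivity)] at hexp
  have hau : ‖u‖ ^ (p - 1) = ‖u‖ ^ (p - 2) * ‖u‖ := by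
    rw [← Real.rpow_add_one ha.ne']
    ring_nf
  have hcv : ‖v‖ ^ (p - 1) = ‖v‖ ^ (p - 2) * ‖v‖ := by
    rw [← Real.rpow_add_one hc.ne']
    ring_nf
  have hdiff := abs_rpow_sub_rpow_le ha.le hc.le hq0 hq1
  have hsum := rpow_add_rpow_le ha.le hc.le hq0 hq1
  rw [show 1 - (p - 1) = 2 - p by ring] at hsum
  generalize (2 : ℝ) ^ (2 - p) = K at *
  generalize ‖u‖ = a at *
  generalize ‖v‖ = c at *
  generalize inner ℝ u v = t at *
  -- `l` is the weight with `‖u - v‖ ^ 2 = l * (a + c) ^ 2 + (1 - l) * (a - c) ^ 2`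
  obtain ⟨l, hl⟩ : ∃ l, t = a * c * (1 - 2 * l) :=
    ⟨(1 - t / (a * c)) / 2, by field_simp; ring⟩
  have hac : 0 < a * c := mul_pos ha hc
  have hl0 : 0 ≤ l := by
    by_contra! h
    nlinarith [mul_pos hac (neg_pos.2 h)]
  have hl1 : 0 ≤ 1 - l := by
    by_contra! h
    nlinarith [mul_pos hac (neg_pos.2 h)]
  have hs' : ‖u - v‖ ^ 2 = l * (a + c) ^ 2 + (1 - l) * |a - c| ^ 2 := by
    rw [hs, hl, sq_abs]
    ring
  have hconc := (Real.concaveOn_rpow hq0 hq1).2 (Set.mem_Ici.2 (sq_nonneg (a + c)))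
    (Set.mem_Ici.2 (sq_nonneg |a - c|)) hl0 hl1 (by ring)
  simp only [smul_eq_mul] at hconc
  have hcomm : ∀ x : ℝ, 0 ≤ x → (x ^ 2) ^ (p - 1) = (x ^ (p - 1)) ^ 2 := fun x hx =>
    (Real.rpow_pow_comm hx (p - 1) 2).symm
  rw [← hs', hcomm _ (by positivity), hcomm _ (by positivity), hcomm _ (by positivity)] at hconc
  have hLHS : ‖a ^ (p - 2) • u - c ^ (p - 2) • v‖ ^ 2
      = l * (a ^ (p - 1) + c ^ (p - 1)) ^ 2 + (1 - l) * |a ^ (p - 1) - c ^ (p - 1)| ^ 2 := by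
    rw [hexp, hl, sq_abs, hau, hcv]
    ring
  have hK0 : 0 ≤ K := by linarith
  refine (pow_le_pow_iff_left₀ (norm_nonneg _) (by positivity) two_ne_zero).1 ?_
  have h1 : (a ^ (p - 1) + c ^ (p - 1)) ^ 2 ≤ (K * (a + c) ^ (p - 1)) ^ 2 :=
    pow_le_pow_left₀ (by positivity) hsum 2
  have h2 : |a ^ (p - 1) - c ^ (p - 1)| ^ 2 ≤ (K * |a - c| ^ (p - 1)) ^ 2 :=
    pow_le_pow_left₀ (by positivity)
      (hdiff.trans (le_mul_of_one_le_left (by positivity) hK)) 2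
  calc ‖a ^ (p - 2) • u - c ^ (p - 2) • v‖ ^ 2
      ≤ l * (K * (a + c) ^ (p - 1)) ^ 2 + (1 - l) * (K * |a - c| ^ (p - 1)) ^ 2 := by
        rw [hLHS]
        gcongr
    _ = K ^ 2 * (l * ((a + c) ^ (p - 1)) ^ 2 + (1 - l) * (|a - c| ^ (p - 1)) ^ 2) := by ring
    _ ≤ K ^ 2 * (‖u - v‖ ^ (p - 1)) ^ 2 := by gcongr
    _ = (K * ‖u - v‖ ^ (p - 1)) ^ 2 := by ring

/-- The generalized least-`p`-norm objective
`f(x) = (1/p)‖Ax − b‖^p` is differentiable with gradient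
`∇f(x) = ‖Ax − b‖^{p−2}Aᵀ(Ax − b)`, and the gradient is `(p−1)`-Hölder continuous
with constant `2^{2−p}‖A‖^p`. -/
theorem least_p_norm_holder_gradient {m n : ℕ} (p : ℝ) (hp : p ∈ Set.Ioc (1 : ℝ) 2)
    (A : EuclideanSpace ℝ (Fin n) →L[ℝ] EuclideanSpace ℝ (Fin m))
    (b : EuclideanSpace ℝ (Fin m))
    (f : EuclideanSpace ℝ (Fin n) → ℝ)
    (hfdef : ∀ x, f x = 1 / p * ‖A x - b‖ ^ p) :
    (∀ x : EuclideanSpace ℝ (Fin n),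
      HasGradientAt f
        ((‖A x - b‖ ^ (p - 2)) • ContinuousLinearMap.adjoint A (A x - b)) x) ∧
    (∀ x y : EuclideanSpace ℝ (Fin n),
      ‖(‖A x - b‖ ^ (p - 2)) • ContinuousLinearMap.adjoint A (A x - b) -
          (‖A y - b‖ ^ (p - 2)) • ContinuousLinearMap.adjoint A (A y - b)‖ ≤
        2 ^ (2 - p) * ‖A‖ ^ p * ‖x - y‖ ^ (p - 1)) := by
  obtain ⟨hp1, hp2⟩ := hp
  refine ⟨fun x => ?_, fun x y => ?_⟩
  · obtain rfl : f = fun x => 1 / p * ‖A x - b‖ ^ p := funext hfdef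
    rw [hasGradientAt_iff_hasFDerivAt]
    have h := ((hasFDerivAt_norm_rpow (A x - b) hp1).comp x
      (A.hasFDerivAt.sub_const b)).const_mul (1 / p)
    refine h.congr_fderiv ?_
    ext z
    have hp0 : p ≠ 0 := by linarith
    simp [ContinuousLinearMap.adjoint_inner_left]
    field_simp
  · rw [← map_smul, ← map_smul, ← map_sub]
    have hq0 : 0 ≤ p - 1 := by linarith
    have hxy : A x - b - (A y - b) = A (x - y) := by
      rw [map_sub]
      abel
    have hpow : ‖A‖ ^ p = ‖A‖ * ‖A‖ ^ (p - 1) := by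
      rw [← Real.rpow_one_add' (norm_nonneg A) (by linarith)]
      ring_nf
    calc _ ≤ ‖ContinuousLinearMap.adjoint A‖ * _ := ContinuousLinearMap.le_opNorm _ _
      _ ≤ ‖A‖ * (2 ^ (2 - p) * ‖A (x - y)‖ ^ (p - 1)) := by
        rw [LinearIsometryEquiv.norm_map, ← hxy]
        gcongr
        exact norm_rpow_smul_sub_le hp1 hp2 _ _
      _ ≤ ‖A‖ * (2 ^ (2 - p) * (‖A‖ * ‖x - y‖) ^ (p - 1)) := by
        gcongr
        exact A.le_opNorm _
      _ = 2 ^ (2 - p) * ‖A‖ ^ p * ‖x - y‖ ^ (p - 1) := by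
        rw [hpow, Real.mul_rpow (norm_nonneg _) (norm_nonneg _)]
        ring
end
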